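/- Let r ∈ {2,3}, let m ∈ ℕ, and let p be a prime with p > r. If p is large enough that 1/r + (p^m − 1)/(p^{m+1} − p^m) + 1/p ≥ (log_2(r·p^{m+1}))/p, then K_1(C_r ⊕ C_{p^m} ⊕ C_p) = K_1^*(C_r ⊕ C_{p^m} ⊕ C_p) = 2 + (p^m − 1)/(p^m − p^{m−1}). -/

import Mathlib

open Finset

/-- `S(I)` is minimal zero-sum: nonempty, zero-sum, and no proper nonempty
subfamily is zero-sum. -/
def IsMinZeroSum {G : Type*} [AddCommGroup G] {ℓ : ℕ} (g : Fin ℓ → G)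
    (I : Finset (Fin ℓ)) : Prop :=
  I.Nonempty ∧ ∑ i ∈ I, g i = 0 ∧ ∀ J ⊂ I, J.Nonempty → ∑ i ∈ J, g i ≠ 0

/-- `P` is an irreducible factorization of the indexed multiset `g`: a partition
of the index set all of whose parts are minimal zero-sum. -/
def IsFactorization {G : Type*} [AddCommGroup G] {ℓ : ℕ} (g : Fin ℓ → G)
    (P : Finpartition (Finset.univ : Finset (Fin ℓ))) : Prop :=
  ∀ I ∈ P.parts, IsMinZeroSum g I

/-- `g` is a unique factorization indexed multiset (UFIM) over `G∖{0}`: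
all elements are nonzero and there is exactly one irreducible factorization. -/
def IsUFIM {G : Type*} [AddCommGroup G] {ℓ : ℕ} (g : Fin ℓ → G) : Prop :=
  (∀ i, g i ≠ 0) ∧
  ∃! P : Finpartition (Finset.univ : Finset (Fin ℓ)), IsFactorization g P

/-- The cross number `k(S) = ∑ 1/ord(g_i)`. -/
noncomputable def crossNum {G : Type*} [AddCommGroup G] {ℓ : ℕ} (g : Fin ℓ → G) : ℝ :=
  ∑ i, (1 : ℝ) / (addOrderOf (g i) : ℝ)

/-- `K₁(G)`: the maximal cross number of a UFIM over `G∖{0}`. -/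
noncomputable def K1 (G : Type*) [AddCommGroup G] : ℝ :=
  sSup {x : ℝ | ∃ (ℓ : ℕ) (g : Fin ℓ → G), IsUFIM g ∧ crossNum g = x}

/-- `N₁(G)`: the maximal length of a UFIM over `G∖{0}`. -/
noncomputable def N1 (G : Type*) [AddCommGroup G] : ℕ :=
  sSup {n : ℕ | ∃ g : Fin n → G, IsUFIM g}

/-- `K(G)`: the maximal cross number of a minimal zero-sum indexed multiset over `G∖{0}`. -/
noncomputable def Kcross (G : Type*) [AddCommGroup G] : ℝ :=
  sSup {x : ℝ | ∃ (ℓ : ℕ) (g : Fin ℓ → G), (∀ i, g i ≠ 0) ∧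
    IsMinZeroSum g Finset.univ ∧ crossNum g = x}

/-- `g` is zero-sum free: no nonempty subfamily is zero-sum. -/
def IsZeroSumFree {G : Type*} [AddCommGroup G] {ℓ : ℕ} (g : Fin ℓ → G) : Prop :=
  ∀ I : Finset (Fin ℓ), I.Nonempty → ∑ i ∈ I, g i ≠ 0

/-- The little cross number `k(G)`: the maximal cross number of a zero-sum free
indexed multiset over `G∖{0}`. -/
noncomputable def littleCross (G : Type*) [AddCommGroup G] : ℝ :=
  sSup {x : ℝ | ∃ (ℓ : ℕ) (g : Fin ℓ → G), (∀ i, g i ≠ 0) ∧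
    IsZeroSumFree g ∧ crossNum g = x}



/-- partial unique factorization property of a subfamily -/
def PU {ι G : Type*} [DecidableEq ι] [AddCommGroup G] (g : ι → G) (s : Finset ι) : Prop :=
  (∀ i ∈ s, g i ≠ 0) ∧ ∀ A ⊆ s, ∀ B ⊆ s, ∑ i ∈ A, g i = 0 → ∑ i ∈ B, g i = 0 →
    ∑ i ∈ A ∩ B, g i = 0

/-- zero-sum free subfamily -/
def ZF {ι G : Type*} [AddCommGroup G] (g : ι → G) (s : Finset ι) : Prop :=
  ∀ A ⊆ s, A.Nonempty → ∑ i ∈ A, g i ≠ 0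

/-- minimal zero-sum subfamily -/
def MZ {ι G : Type*} [AddCommGroup G] (g : ι → G) (s : Finset ι) : Prop :=
  s.Nonempty ∧ ∑ i ∈ s, g i = 0 ∧ ∀ A ⊂ s, A.Nonempty → ∑ i ∈ A, g i ≠ 0

section basics
variable {ι G : Type*} [DecidableEq ι] [AddCommGroup G] {g : ι → G} {s t : Finset ι}

theorem PU.mono (h : PU g t) (hs : s ⊆ t) : PU g s :=
  ⟨fun i hi => h.1 i (hs hi), fun A hA B hB => h.2 A (hA.trans hs) B (hB.trans hs)⟩

theorem ZF.mono (h : ZF g t) (hs : s ⊆ t) : ZF g s := fun A hA => h A (hA.trans hs)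

theorem ZF.pu (h : ZF g s) : PU g s := by
  refine ⟨fun i hi h0 => h {i} (by simpa using hi) (by simp) (by simpa using h0), ?_⟩
  intro A hA B hB h1 h2
  rcases A.eq_empty_or_nonempty with rfl | hne
  · simp
  · exact absurd h1 (h A hA hne)

theorem MZ.pu (h : MZ g s) (h0 : ∀ i ∈ s, g i ≠ 0) : PU g s := by
  refine ⟨h0, ?_⟩
  intro A hA B hB h1 h2
  rcases A.eq_empty_or_nonempty with rfl | hne
  · simp
  · by_cases hAs : A = s
    · subst hAs
      rwa [Finset.inter_eq_right.2 hB]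
    · exact absurd h1 (h.2.2 A (hA.ssubset_of_ne hAs) hne)

theorem exists_MZ (hne : s.Nonempty) (h0 : ∑ i ∈ s, g i = 0) : ∃ P ⊆ s, MZ g P := by
  classical
  induction s using Finset.strongInduction with
  | H s ih =>
    by_cases h : ∃ A ⊂ s, A.Nonempty ∧ ∑ i ∈ A, g i = 0
    · obtain ⟨A, hA, hn, hs⟩ := h
      obtain ⟨P, hP, hm⟩ := ih A hA hn hs
      exact ⟨P, hP.trans hA.1, hm⟩
    · push Not at h
      exact ⟨s, Subset.rfl, hne, h0, h⟩

theorem sum_sdiff_zero {A : Finset ι} (hA : A ⊆ s) (h : ∑ i ∈ s, g i = 0) (h1 : ∑ i ∈ A, g i = 0) :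
    ∑ i ∈ s \ A, g i = 0 := by
  have := Finset.sum_sdiff (f := g) hA
  rw [h, h1, add_zero] at this; exact this

theorem two_le_card (hne : s.Nonempty) (hnz : ∀ i ∈ s, g i ≠ 0) (h0 : ∑ i ∈ s, g i = 0) :
    2 ≤ s.card := by
  by_contra hc
  have h1 : s.card = 1 := by have := hne.card_pos; omega
  obtain ⟨a, rfl⟩ := Finset.card_eq_one.1 h1
  exact hnz a (by simp) (by simpa using h0)

/-! merging -/
theorem merge_sum {J : Finset ι} {j : ι} (hj : j ∈ J) {A : Finset ι} (hA : A ⊆ insert j (s \ J)) :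
    ∑ i ∈ A, Function.update g j (∑ i ∈ J, g i) i = ∑ i ∈ (if j ∈ A then A ∪ J else A), g i := by
  split_ifs with h
  · have e : A ∪ J = (A.erase j) ∪ J := by
      ext x; simp only [mem_union, mem_erase]
      constructor
      · rintro (h1 | h1)
        · by_cases hx : x = j
          · subst hx; exact Or.inr hj
          · exact Or.inl ⟨hx, h1⟩
        · exact Or.inr h1
      · rintro (h1 | h1)
        · exact Or.inl h1.2
        · exact Or.inr h1
    have hd : Disjoint (A.erase j) J := by
      rw [Finset.disjoint_left]
      intro x hx hxJ
      have := hA (mem_of_mem_erase hx)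
      simp only [mem_insert, mem_sdiff] at this
      rcases this with h1 | h1
      · exact (mem_erase.1 hx).1 h1
      · exact h1.2 hxJ
    rw [e, Finset.sum_union hd, ← Finset.add_sum_erase A _ h, add_comm]
    congr 1
    · apply Finset.sum_congr rfl
      intro x hx
      rw [Function.update_of_ne (mem_erase.1 hx).1]
    · simp
  · apply Finset.sum_congr rfl
    intro x hx
    rw [Function.update_of_ne]
    rintro rfl; exact h hx

theorem lift_sub {J : Finset ι} (hJ : J ⊆ s) {j : ι} (hj : j ∈ J) {A : Finset ι}
    (hA : A ⊆ insert j (s \ J)) : (if j ∈ A then A ∪ J else A) ⊆ s := by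
  have : A ⊆ s := by
    intro x hx
    have := hA hx
    simp only [mem_insert, mem_sdiff] at this
    rcases this with rfl | h
    · exact hJ hj
    · exact h.1
  split_ifs
  · exact union_subset this hJ
  · exact this

theorem lift_inter {J : Finset ι} {j : ι} (hj : j ∈ J) {A B : Finset ι}
    (hA : A ⊆ insert j (s \ J)) (hB : B ⊆ insert j (s \ J)) :
    (if j ∈ A then A ∪ J else A) ∩ (if j ∈ B then B ∪ J else B) =
      if j ∈ A ∩ B then (A ∩ B) ∪ J else A ∩ B := by
  have key : ∀ C ⊆ insert j (s \ J), j ∉ C → ∀ x ∈ C, x ∉ J := by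
    intro C hC hjC x hx hxJ
    have := hC hx
    simp only [mem_insert, mem_sdiff] at this
    rcases this with rfl | h
    · exact hjC hx
    · exact h.2 hxJ
  by_cases h1 : j ∈ A <;> by_cases h2 : j ∈ B <;> simp only [h1, h2, mem_inter, if_true, if_false, and_true, and_false, true_and]
  · ext x; simp only [mem_inter, mem_union]; tauto
  · ext x; simp only [mem_inter, mem_union]
    have := key B hB h2 x; tauto
  · ext x; simp only [mem_inter, mem_union]
    have := key A hA h1 x; tauto

theorem PU.merge (h : PU g s) {J : Finset ι} (hJ : J ⊆ s) {j : ι} (hj : j ∈ J)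
    (hs : ∑ i ∈ J, g i ≠ 0) :
    PU (Function.update g j (∑ i ∈ J, g i)) (insert j (s \ J)) := by
  constructor
  · intro i hi
    by_cases hij : i = j
    · subst hij; simpa using hs
    · rw [Function.update_of_ne hij]
      simp only [mem_insert, mem_sdiff] at hi
      exact h.1 i (by tauto)
  · intro A hA B hB h1 h2
    rw [merge_sum hj hA] at h1
    rw [merge_sum hj hB] at h2
    have hAB : A ∩ B ⊆ insert j (s \ J) := inter_subset_left.trans hA
    rw [merge_sum hj hAB, ← lift_inter hj hA hB]
    exact h.2 _ (lift_sub hJ hj hA) _ (lift_sub hJ hj hB) h1 h2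

theorem ZF.merge (h : ZF g s) {J : Finset ι} (hJ : J ⊆ s) {j : ι} (hj : j ∈ J) :
    ZF (Function.update g j (∑ i ∈ J, g i)) (insert j (s \ J)) := by
  intro A hA hne
  rw [merge_sum hj hA]
  apply h _ (lift_sub hJ hj hA)
  split_ifs
  · exact hne.mono subset_union_left
  · exact hne

theorem merge_total {J : Finset ι} (hJ : J ⊆ s) {j : ι} (hj : j ∈ J) :
    ∑ i ∈ insert j (s \ J), Function.update g j (∑ i ∈ J, g i) i = ∑ i ∈ s, g i := by
  rw [merge_sum hj Subset.rfl, if_pos (mem_insert_self _ _)]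
  congr 1
  ext x
  have := @hJ x
  simp only [mem_union, mem_insert, mem_sdiff]
  by_cases hx : x = j
  · subst hx; simp [hj, hJ hj]
  · by_cases x ∈ J <;> tauto

theorem merge_weight {M : Type*} [AddCommMonoid M] (w : G → M) {J : Finset ι} {j : ι} (hj : j ∈ J) :
    ∑ i ∈ insert j (s \ J), w (Function.update g j (∑ i ∈ J, g i) i)
      = w (∑ i ∈ J, g i) + ∑ i ∈ s \ J, w (g i) := by
  rw [Finset.sum_insert (by simp [hj])]
  congr 1
  · simp
  · apply Finset.sum_congr rfl
    intro x hx
    rw [Function.update_of_ne]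
    rintro rfl
    exact (mem_sdiff.1 hx).2 hj

theorem merge_card {J : Finset ι} (hJ : J ⊆ s) {j : ι} (hj : j ∈ J) :
    (insert j (s \ J)).card + J.card = s.card + 1 := by
  rw [Finset.card_insert_of_notMem (by simp [hj])]
  have := Finset.card_sdiff_add_card_eq_card hJ
  omega

/-! completion -/
theorem PU.complete (h : PU g s) (hs : ∑ i ∈ s, g i ≠ 0) :
    ∃ g' : Option ι → G, ∃ s' : Finset (Option ι), PU g' s' ∧ ∑ i ∈ s', g' i = 0 ∧
      s'.card = s.card + 1 ∧ ((ZF g s) → MZ g' s') ∧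
      (∀ K : AddSubgroup G, (∀ i ∈ s, g i ∈ K) → ∀ i ∈ s', g' i ∈ K) := by
  classical
  set g' : Option ι → G := fun o => o.elim (-∑ i ∈ s, g i) g with hg'
  have sumE : ∀ A : Finset (Option ι), ∑ i ∈ A, g' i =
      (∑ i ∈ eraseNone A, g i) + if none ∈ A then -∑ i ∈ s, g i else 0 := by
    intro A
    have hm : ∑ i ∈ eraseNone A, g i = ∑ i ∈ A.erase none, g' i := by
      rw [← Finset.map_some_eraseNone, Finset.sum_map]; rfl
    rw [hm]
    split_ifs with hA
    · rw [← Finset.sum_erase_add _ _ hA]; rfl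
    · rw [Finset.erase_eq_of_notMem hA, add_zero]
  have sub : ∀ A ⊆ insertNone s, eraseNone A ⊆ s := by
    intro A hA x hx
    have := hA (mem_eraseNone.1 hx)
    simpa using this
  have tot : ∑ i ∈ insertNone s, g' i = 0 := by
    rw [sumE]; simp
  -- for every zero-sum set, an associated zero-sum subset of s
  have cmpl : ∀ A ⊆ insertNone s, ∑ i ∈ A, g' i = 0 →
      (none ∉ A ∧ ∑ i ∈ eraseNone A, g i = 0) ∨ (none ∈ A ∧ ∑ i ∈ s \ eraseNone A, g i = 0) := by
    intro A hA h0
    rw [sumE] at h0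
    by_cases hn : none ∈ A
    · right
      refine ⟨hn, ?_⟩
      rw [if_pos hn] at h0
      have := Finset.sum_sdiff (f := g) (sub A hA)
      rw [← this] at h0
      have h1 : -(∑ i ∈ s \ eraseNone A, g i) = 0 := by rw [← h0]; abel
      simpa using h1
    · left; rw [if_neg hn] at h0; exact ⟨hn, by simpa using h0⟩
  have inter : ∀ A ⊆ s, ∀ B ⊆ s, ∑ i ∈ A, g i = 0 → ∑ i ∈ B, g i = 0 → ∑ i ∈ A \ B, g i = 0 := by
    intro A hA B hB h1 h2
    have h3 := h.2 A hA B hB h1 h2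
    have := sum_sdiff_zero (s := A) inter_subset_left h1 h3
    rwa [sdiff_inter_self_left] at this
  refine ⟨g', insertNone s, ⟨?_, ?_⟩, tot, by simp, ?_, ?_⟩
  · intro i hi
    cases i with
    | none => simpa [hg'] using hs
    | some i => exact h.1 i (by simpa using hi)
  · intro A hA B hB h1 h2
    rw [sumE, eraseNone_inter]
    have hA' := sub A hA
    have hB' := sub B hB
    rcases cmpl A hA h1 with ⟨a1, a2⟩ | ⟨a1, a2⟩ <;> rcases cmpl B hB h2 with ⟨b1, b2⟩ | ⟨b1, b2⟩
    · rw [if_neg (by simp [a1]), add_zero]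
      exact h.2 _ hA' _ hB' a2 b2
    · rw [if_neg (by simp [a1]), add_zero]
      have := inter _ hA' _ sdiff_subset a2 b2
      convert this using 2
      ext x; have := @hA' x
      simp only [mem_inter, mem_sdiff]; tauto
    · rw [if_neg (by simp [b1]), add_zero]
      have := inter _ hB' _ sdiff_subset b2 a2
      convert this using 2
      ext x; have := @hB' x
      simp only [mem_inter, mem_sdiff]; tauto
    · rw [if_pos (by simp [a1, b1])]
      have h3 := inter _ sdiff_subset _ sdiff_subset a2 b2
      have h4 : ∑ i ∈ s \ (eraseNone A ∩ eraseNone B), g i = 0 := by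
        have e : s \ (eraseNone A ∩ eraseNone B) =
          ((s \ eraseNone A) \ (s \ eraseNone B)) ∪ (s \ eraseNone B) := by
          ext x; simp only [mem_inter, mem_sdiff, mem_union]; tauto
        rw [e, Finset.sum_union sdiff_disjoint, h3, b2, add_zero]
      have := Finset.sum_sdiff (f := g) (inter_subset_left.trans hA' : eraseNone A ∩ eraseNone B ⊆ s)
      rw [← this, h4]; abel
  · intro hz
    refine ⟨⟨none, by simp⟩, tot, ?_⟩
    intro A hA hne h0
    rcases cmpl A hA.1 h0 with ⟨a1, a2⟩ | ⟨a1, a2⟩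
    · have : (eraseNone A).Nonempty := by
        obtain ⟨x, hx⟩ := hne
        cases x with
        | none => exact absurd hx a1
        | some x => exact ⟨x, by simpa using hx⟩
      exact hz _ (sub A hA.1) this a2
    · have : (s \ eraseNone A).Nonempty := by
        obtain ⟨x, hx, hx2⟩ := Finset.exists_of_ssubset hA
        cases x with
        | none => exact absurd a1 hx2
        | some x => exact ⟨x, by simp at hx; simp [hx, hx2]⟩
      exact hz _ sdiff_subset this a2
  · intro K hK i hi
    cases i with
    | none => exact K.neg_mem (K.sum_mem hK)
    | some i => exact hK i (by simpa using hi)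

/-! difference sets -/
/-- all differences of `C` are subset sums of `s` -/
def GoodC {ι G : Type*} [AddCommGroup G] (g : ι → G) (s : Finset ι) (C : Finset G) : Prop :=
  ∀ c ∈ C, ∀ c' ∈ C, ∃ A ⊆ s, ∑ i ∈ A, g i = c - c'

theorem PU.split (h : PU g t) {s₁ s₂ A B : Finset ι} (h1 : s₁ ⊆ t) (h2 : s₂ ⊆ t)
    (hd : Disjoint s₁ s₂) (hz : ∑ i ∈ s₁, g i = 0) (hA : A ⊆ s₁) (hB : B ⊆ s₂)
    (h0 : ∑ i ∈ A, g i + ∑ i ∈ B, g i = 0) : ∑ i ∈ A, g i = 0 ∧ ∑ i ∈ B, g i = 0 := by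
  have hdAB : Disjoint A B := disjoint_of_subset_left hA (disjoint_of_subset_right hB hd)
  have := h.2 (A ∪ B) (union_subset (hA.trans h1) (hB.trans h2)) s₁ h1
    (by rw [Finset.sum_union hdAB, h0]) hz
  have e : (A ∪ B) ∩ s₁ = A := by
    ext x
    have ha : x ∈ A → x ∈ s₁ := fun h => hA h
    have hb : x ∈ B → x ∈ s₂ := fun h => hB h
    have hd' : x ∈ s₁ → x ∉ s₂ := fun h => Finset.disjoint_left.1 hd h
    simp only [mem_inter, mem_union]; tauto
  rw [e] at this
  refine ⟨this, ?_⟩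
  rwa [this, zero_add] at h0

theorem GoodC.prod (h : PU g t) {s₁ s₂ : Finset ι} (h1 : s₁ ⊆ t) (h2 : s₂ ⊆ t)
    (hd : Disjoint s₁ s₂) (hz : ∑ i ∈ s₁, g i = 0) {C₁ C₂ : Finset G}
    (hC1 : GoodC g s₁ C₁) (hC2 : GoodC g s₂ C₂) :
    ∃ C : Finset G, GoodC g (s₁ ∪ s₂) C ∧ C.card = C₁.card * C₂.card := by
  classical
  refine ⟨(C₁ ×ˢ C₂).image (fun x => x.1 + x.2), ?_, ?_⟩
  · intro c hc c' hc'
    simp only [mem_image, mem_product, Prod.exists] at hc hc'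
    obtain ⟨a, b, ⟨ha, hb⟩, rfl⟩ := hc
    obtain ⟨a', b', ⟨ha', hb'⟩, rfl⟩ := hc'
    obtain ⟨A, hA, eA⟩ := hC1 a ha a' ha'
    obtain ⟨B, hB, eB⟩ := hC2 b hb b' hb'
    refine ⟨A ∪ B, union_subset_union hA hB, ?_⟩
    rw [Finset.sum_union (disjoint_of_subset_left hA (disjoint_of_subset_right hB hd)), eA, eB]
    abel
  · rw [Finset.card_image_of_injOn, card_product]
    rintro ⟨a, b⟩ hab ⟨a', b'⟩ hab' he
    simp only [coe_product, Set.mem_prod, mem_coe] at hab hab'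
    obtain ⟨A, hA, eA⟩ := hC1 a hab.1 a' hab'.1
    obtain ⟨B, hB, eB⟩ := hC2 b hab.2 b' hab'.2
    have he' : a + b = a' + b' := he
    have := h.split h1 h2 hd hz hA hB (by rw [eA, eB]; rw [show a - a' + (b - b') = (a + b) - (a' + b') by abel, he', sub_self])
    rw [eA, eB] at this
    rw [sub_eq_zero.1 this.1, sub_eq_zero.1 this.2]

theorem exists_chain (Q : Finset ι) : ∃ T : ℕ → Finset ι, Monotone T ∧ (∀ i, T i ⊆ Q) ∧
    ∀ i ≤ Q.card, (T i).card = i := by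
  classical
  let f := Q.equivFin
  refine ⟨fun i => (Q.attach.filter (fun x => (f x : ℕ) < i)).map (Function.Embedding.subtype _), ?_, ?_, ?_⟩
  · intro i j hij
    apply Finset.map_subset_map.2
    intro x hx
    simp only [mem_filter] at hx ⊢
    exact ⟨hx.1, by omega⟩
  · intro i x hx
    simp only [mem_map, mem_filter] at hx
    obtain ⟨y, _, rfl⟩ := hx
    exact y.2
  · intro i hi
    rw [card_map]
    have : (Q.attach.filter (fun x => (f x : ℕ) < i)) =
      ((univ : Finset (Fin Q.card)).filter (fun x : Fin Q.card => (x : ℕ) < i)).map f.symm.toEmbedding := by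
      ext x
      simp
    rw [this, card_map, Fin.card_filter_val_lt]
    simpa using hi

theorem MZ.chain (h : MZ g s) : ∃ C, GoodC g s C ∧ C.card = s.card := by
  classical
  obtain ⟨T, hm, hT, hc⟩ := exists_chain s
  have diff : ∀ i j, i ≤ j → ∑ x ∈ T j, g x - ∑ x ∈ T i, g x = ∑ x ∈ T j \ T i, g x := by
    intro i j hij
    rw [← Finset.sum_sdiff (hm hij)]; abel
  refine ⟨(range s.card).image (fun i => ∑ x ∈ T i, g x), ?_, ?_⟩
  · intro c hcc c' hcc'
    simp only [mem_image, mem_range] at hcc hcc'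
    obtain ⟨i, hi, rfl⟩ := hcc
    obtain ⟨j, hj, rfl⟩ := hcc'
    rcases le_total i j with hij | hij
    · refine ⟨s \ (T j \ T i), sdiff_subset, ?_⟩
      have := Finset.sum_sdiff (f := g) (sdiff_subset.trans (hT j) : T j \ T i ⊆ s)
      rw [h.2.1, ← diff i j hij] at this
      rw [eq_comm, ← sub_eq_zero, ← neg_eq_zero, ← this]; abel
    · exact ⟨T i \ T j, sdiff_subset.trans (hT i), (diff j i hij).symm⟩
  · rw [Finset.card_image_of_injOn, card_range]
    have main : ∀ i j, i < j → j < s.card → ∑ x ∈ T i, g x ≠ ∑ x ∈ T j, g x := by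
      intro i j hij hj he
      have h1 := diff i j hij.le
      rw [he, sub_self] at h1
      have hcard : (T j \ T i).card = j - i := by
        rw [Finset.card_sdiff_of_subset (hm hij.le), hc _ hj.le, hc _ (by omega)]
      refine h.2.2 (T j \ T i) ?_ ?_ h1.symm
      · refine (sdiff_subset.trans (hT j)).ssubset_of_ne ?_
        intro h2; rw [h2] at hcard; omega
      · rw [← Finset.card_pos]; omega
    intro i hi j hj he
    simp only [coe_range, Set.mem_Iio] at hi hj
    rcases lt_trichotomy i j with hl | hl | hl
    · exact absurd he (main i j hl hj)
    · exact hl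
    · exact absurd he.symm (main j i hl hi)

theorem PU.exists_good (h : PU g s) (h0 : ∑ i ∈ s, g i = 0) (hne : s.Nonempty) :
    ∃ C, GoodC g s C ∧ s.card ≤ C.card := by
  classical
  induction s using Finset.strongInduction with
  | H s ih =>
    obtain ⟨P, hP, hm⟩ := exists_MZ hne h0
    obtain ⟨C₁, hC₁, hc₁⟩ := hm.chain
    by_cases hPs : P = s
    · subst hPs; exact ⟨C₁, hC₁, hc₁.ge⟩
    · have hR0 := sum_sdiff_zero hP h0 hm.2.1
      have hRne : (s \ P).Nonempty := by
        rw [Finset.sdiff_nonempty]; intro h1; exact hPs (hP.antisymm h1)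
      obtain ⟨C₂, hC₂, hc₂⟩ := ih (s \ P) (Finset.sdiff_ssubset hP hm.1) (h.mono sdiff_subset) hR0 hRne
      obtain ⟨C, hC, hc⟩ := GoodC.prod h hP sdiff_subset disjoint_sdiff hm.2.1 hC₁ hC₂
      rw [union_sdiff_of_subset hP] at hC
      refine ⟨C, hC, ?_⟩
      have a1 := two_le_card hm.1 (h.mono hP).1 hm.2.1
      have a2 := two_le_card hRne (h.mono sdiff_subset).1 hR0
      have a3 := Finset.card_sdiff_add_card_eq_card hP
      rw [hc, hc₁]
      nlinarith

theorem GoodC.card_le {C : Finset G} (hC : GoodC g s C) (K : AddSubgroup G) [Finite K]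
    (hK : ∀ i ∈ s, g i ∈ K) : C.card ≤ Nat.card K := by
  classical
  rcases C.eq_empty_or_nonempty with rfl | ⟨c0, h0⟩
  · simp
  · have hmem : ∀ c ∈ C, c - c0 ∈ K := by
      intro c hc
      obtain ⟨A, hA, e⟩ := hC c hc c0 h0
      rw [← e]; exact K.sum_mem (fun i hi => hK i (hA hi))
    have := Nat.card_le_card_of_injective (fun c : C => (⟨c.1 - c0, hmem c.1 c.2⟩ : K)) (by
      intro a b hab
      simp only [Subtype.mk.injEq, sub_left_inj] at hab
      exact Subtype.ext hab)
    simpa using this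

theorem PU.card_le (h : PU g s) (K : AddSubgroup G) [Finite K]
    (hK : ∀ i ∈ s, g i ∈ K) : s.card ≤ Nat.card K := by
  rcases s.eq_empty_or_nonempty with rfl | hne
  · simp
  by_cases h0 : ∑ i ∈ s, g i = 0
  · obtain ⟨C, hC, hc⟩ := h.exists_good h0 hne
    exact hc.trans (hC.card_le K hK)
  · obtain ⟨g', s', h1, h2, h3, h4, h5⟩ := h.complete h0
    obtain ⟨C, hC, hc⟩ := h1.exists_good h2 (by rw [← Finset.card_pos]; omega)
    have := hC.card_le K (h5 K hK)
    omega

theorem ZF.card_lt (h : ZF g s) (K : AddSubgroup G) [Finite K]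
    (hK : ∀ i ∈ s, g i ∈ K) : s.card < Nat.card K := by
  rcases s.eq_empty_or_nonempty with rfl | hne
  · simp [Nat.card_pos]
  obtain ⟨g', s', h1, h2, h3, h4, h5⟩ := h.pu.complete (h s Subset.rfl hne)
  have := h1.card_le K (h5 K hK)
  omega

end basics


section poly
variable {K : Type*} [Field K]

/-- functions spanned by monomials of degree below `d` -/
def Pol (K : Type*) [Field K] (d : ℕ) : Submodule K (K × K → K) :=
  Submodule.span K {F | ∃ i j : ℕ, i + j < d ∧ F = fun x => x.1 ^ i * x.2 ^ j}

theorem Pol.mon {d i j : ℕ} (h : i + j < d) : (fun x : K × K => x.1 ^ i * x.2 ^ j) ∈ Pol K d :=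
  Submodule.subset_span ⟨i, j, h, rfl⟩

theorem Pol.mono {d e : ℕ} (h : d ≤ e) : Pol K d ≤ Pol K e := by
  apply Submodule.span_mono
  rintro F ⟨i, j, hij, rfl⟩
  exact ⟨i, j, by omega, rfl⟩

theorem Pol.mul1 {d : ℕ} {F : K × K → K} (h : F ∈ Pol K d) :
    (fun x => x.1 * F x) ∈ Pol K (d + 1) := by
  induction h using Submodule.span_induction with
  | mem F hF =>
    obtain ⟨i, j, hij, rfl⟩ := hF
    have := Pol.mon (K := K) (d := d + 1) (i := i + 1) (j := j) (by omega)
    convert this using 2; ring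
  | zero => convert Submodule.zero_mem (Pol K (d + 1)) using 1; funext x; simp
  | add F G _ _ h1 h2 =>
    have := Submodule.add_mem _ h1 h2
    convert this using 2; simp [mul_add]
  | smul c F _ h1 =>
    have := Submodule.smul_mem _ c h1
    convert this using 2; simp; ring

theorem Pol.mul2 {d : ℕ} {F : K × K → K} (h : F ∈ Pol K d) :
    (fun x => x.2 * F x) ∈ Pol K (d + 1) := by
  induction h using Submodule.span_induction with
  | mem F hF =>
    obtain ⟨i, j, hij, rfl⟩ := hF
    have := Pol.mon (K := K) (d := d + 1) (i := i) (j := j + 1) (by omega)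
    convert this using 2; ring
  | zero => convert Submodule.zero_mem (Pol K (d + 1)) using 1; funext x; simp
  | add F G _ _ h1 h2 =>
    have := Submodule.add_mem _ h1 h2
    convert this using 2; simp [mul_add]
  | smul c F _ h1 =>
    have := Submodule.smul_mem _ c h1
    convert this using 2; simp; ring

theorem Pol.diff_mon (a : K × K) (i j : ℕ) :
    (fun x : K × K => x.1 ^ i * x.2 ^ j - (x.1 - a.1) ^ i * (x.2 - a.2) ^ j) ∈ Pol K (i + j) := by
  have sh : ∀ i j : ℕ, (fun x : K × K => x.1 ^ i * x.2 ^ j - (x.1 - a.1) ^ i * (x.2 - a.2) ^ j) ∈ Pol K (i + j) →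
      (fun x : K × K => (x.1 - a.1) ^ i * (x.2 - a.2) ^ j) ∈ Pol K (i + j + 1) := by
    intro i j h
    have h1 := Submodule.sub_mem _ (Pol.mon (K := K) (Nat.lt_succ_self (i + j))) (Pol.mono (Nat.le_succ _) h)
    convert h1 using 1; funext x; simp
  induction i with
  | zero =>
    induction j with
    | zero => 
      convert Submodule.zero_mem (Pol K (0 + 0)) using 1; funext x; simp
    | succ j ih =>
      have h1 := Pol.mul2 ih
      have h2 := Submodule.smul_mem _ a.2 (sh 0 j ih)
      rw [← add_assoc]
      convert Submodule.add_mem _ h1 h2 using 1; funext x; simp; ring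
  | succ i ih =>
      have h1 := Pol.mul1 ih
      have h2 := Submodule.smul_mem _ a.1 (sh i j ih)
      rw [show i + 1 + j = i + j + 1 by ring]
      convert Submodule.add_mem _ h1 h2 using 1; funext x; simp; ring

theorem Pol.diff {d : ℕ} (a : K × K) {F : K × K → K} (h : F ∈ Pol K (d + 1)) :
    (fun x => F x - F (x - a)) ∈ Pol K d := by
  induction h using Submodule.span_induction with
  | mem F hF =>
    obtain ⟨i, j, hij, rfl⟩ := hF
    exact Pol.mono (by omega) (Pol.diff_mon a i j)
  | zero => convert Submodule.zero_mem (Pol K d) using 1; funext x; simp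
  | add F G _ _ h1 h2 =>
    convert Submodule.add_mem _ h1 h2 using 1; funext x; simp; ring
  | smul c F _ h1 =>
    convert Submodule.smul_mem _ c h1 using 1; funext x; simp; ring

/-- kernels decomposed as a sum of `n ^ 2` products -/
def Dec (n : ℕ) (k : K × K → K × K → K) : Prop :=
  ∃ P Q : ℕ × ℕ → K × K → K, ∀ x y, k x y = ∑ t ∈ range n ×ˢ range n,
    if t.1 + t.2 < n then (x.1 ^ t.1 * x.2 ^ t.2) * P t y
      else Q t x * (y.1 ^ (n - 1 - t.1) * y.2 ^ (n - 1 - t.2))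

theorem Dec.add {n : ℕ} {k l : K × K → K × K → K} (hk : Dec n k) (hl : Dec n l) :
    Dec n (fun x y => k x y + l x y) := by
  obtain ⟨P, Q, h⟩ := hk
  obtain ⟨P', Q', h'⟩ := hl
  refine ⟨P + P', Q + Q', fun x y => ?_⟩
  simp only [h, h', ← Finset.sum_add_distrib, Pi.add_apply]
  refine Finset.sum_congr rfl fun t _ => ?_
  split_ifs <;> ring

theorem Dec.smul {n : ℕ} {k : K × K → K × K → K} (c : K) (hk : Dec n k)  :
    Dec n (fun x y => c * k x y) := by
  obtain ⟨P, Q, h⟩ := hk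
  refine ⟨c • P, c • Q, fun x y => ?_⟩
  simp only [h, Finset.mul_sum, Pi.smul_apply, smul_eq_mul]
  refine Finset.sum_congr rfl fun t _ => ?_
  split_ifs <;> ring

theorem Dec.zero {n : ℕ} : Dec n (fun _ _ : K × K => (0 : K)) :=
  ⟨0, 0, fun x y => by simp⟩

theorem Dec.sum {n : ℕ} {τ : Type*} (s : Finset τ) (k : τ → K × K → K × K → K)
    (h : ∀ t ∈ s, Dec n (k t)) : Dec n (fun x y => ∑ t ∈ s, k t x y) := by
  classical
  induction s using Finset.induction_on with
  | empty => simpa using Dec.zero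
  | insert a s ha ih =>
    simp only [Finset.sum_insert ha]
    exact (h a (by simp)).add (ih fun t ht => h t (by simp [ht]))

theorem Dec.mon {n a b c d : ℕ} (h : a + b + c + d + 2 ≤ 2 * n) :
    Dec n (fun x y : K × K => (x.1 ^ a * x.2 ^ b) * (y.1 ^ c * y.2 ^ d)) := by
  by_cases hab : a + b < n
  · refine ⟨fun t y => if t = (a, b) then y.1 ^ c * y.2 ^ d else 0, 0, fun x y => ?_⟩
    rw [Finset.sum_eq_single (a, b)]
    · simp [hab]
    · intro t _ ht; simp [ht]
    · intro ht; exfalso; apply ht; simp; omega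
  · have hc : c + d + 2 ≤ n := by omega
    refine ⟨0, fun t x => if t = (n - 1 - c, n - 1 - d) then x.1 ^ a * x.2 ^ b else 0, fun x y => ?_⟩
    rw [Finset.sum_eq_single (n - 1 - c, n - 1 - d)]
    · rw [if_neg (by simp only; omega)]
      simp only [if_true]
      rw [show n - 1 - (n - 1 - c) = c by omega, show n - 1 - (n - 1 - d) = d by omega]
    · intro t _ ht; simp [ht]
    · intro ht; exfalso; apply ht; simp; omega

theorem Pol.dec {n : ℕ} {F : K × K → K} (h : F ∈ Pol K (2 * n - 1)) :
    Dec n (fun x y => F (y - x)) := by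
  induction h using Submodule.span_induction with
  | mem F hF =>
    obtain ⟨i, j, hij, rfl⟩ := hF
    have e : (fun x y : K × K => (y - x).1 ^ i * (y - x).2 ^ j) = fun x y =>
        ∑ k ∈ range (i + 1), ∑ l ∈ range (j + 1),
          (((-1) ^ (i - k) * (-1) ^ (j - l) * (i.choose k) * (j.choose l) : K)) *
            ((x.1 ^ (i - k) * x.2 ^ (j - l)) * (y.1 ^ k * y.2 ^ l)) := by
      funext x y
      simp only [Prod.fst_sub, Prod.snd_sub]
      rw [sub_eq_add_neg, sub_eq_add_neg]
      rw [add_pow, add_pow, Finset.sum_mul_sum]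
      refine Finset.sum_congr rfl fun k _ => Finset.sum_congr rfl fun l _ => ?_
      rw [neg_pow x.1, neg_pow x.2]; ring
    rw [e]
    refine Dec.sum _ _ fun k hk => Dec.sum _ _ fun l hl => Dec.smul _ (Dec.mon ?_)
    simp only [mem_range] at hk hl
    omega
  | zero => simpa using Dec.zero
  | add F G _ _ h1 h2 => exact h1.add h2
  | smul c F _ h1 => exact h1.smul c

/-- a decomposable nonsingular kernel has size at most `n ^ 2` -/
theorem Dec.card_le {n : ℕ} {k : K × K → K × K → K} (hk : Dec n k) {X : Type*} [Fintype X]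
    (x : X → K × K) (hinj : ∀ v : X → K, (∀ a, ∑ b, k (x a) (x b) * v b = 0) → v = 0) :
    Fintype.card X ≤ n ^ 2 := by
  classical
  obtain ⟨P, Q, h⟩ := hk
  by_contra hc
  push Not at hc
  let I := (range n ×ˢ range n : Finset (ℕ × ℕ))
  have hI : Fintype.card I = n ^ 2 := by simp [I, sq]
  let N : Matrix I X K := fun t b => if t.1.1 + t.1.2 < n then P t.1 (x b) else
    ((x b).1 ^ (n - 1 - t.1.1) * (x b).2 ^ (n - 1 - t.1.2))
  have hker : LinearMap.ker N.mulVecLin ≠ ⊥ := by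
    apply LinearMap.ker_ne_bot_of_finrank_lt
    simp only [Module.finrank_fintype_fun_eq_card]
    omega
  obtain ⟨v, hv, hv0⟩ := (Submodule.ne_bot_iff _).1 hker
  apply hv0
  apply hinj
  intro a
  simp only [h, Finset.sum_mul]
  rw [Finset.sum_comm]
  apply Finset.sum_eq_zero
  intro t ht
  have h1 : N.mulVec v ⟨t, ht⟩ = 0 := by
    have : N.mulVec v = 0 := by simpa using hv
    rw [this]; rfl
  simp only [Matrix.mulVec, dotProduct, N] at h1
  by_cases hlt : t.1 + t.2 < n
  · simp only [hlt, if_true] at h1 ⊢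
    rw [← mul_zero ((x a).1 ^ t.1 * (x a).2 ^ t.2), ← h1, Finset.mul_sum]
    refine Finset.sum_congr rfl fun b _ => by ring
  · simp only [hlt, if_false] at h1 ⊢
    rw [← mul_zero (Q t (x a)), ← h1, Finset.mul_sum]
    refine Finset.sum_congr rfl fun b _ => by ring
end poly

section zp
variable {p : ℕ} [hp : Fact p.Prime]

/-- delta function -/
def dl (p : ℕ) (x : ZMod p × ZMod p) : ZMod p := (1 - x.1 ^ (p - 1)) * (1 - x.2 ^ (p - 1))

theorem dl_eq (x : ZMod p × ZMod p) : dl p x = if x = 0 then 1 else 0 := by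
  have hp1 : p - 1 ≠ 0 := by have := hp.out.two_le; omega
  have key : ∀ u : ZMod p, 1 - u ^ (p - 1) = if u = 0 then 1 else 0 := by
    intro u
    split_ifs with h
    · simp [h, hp1]
    · rw [ZMod.pow_card_sub_one_eq_one h, sub_self]
  unfold dl
  rw [key, key]
  by_cases h1 : x.1 = 0 <;> by_cases h2 : x.2 = 0 <;> simp [h1, h2, Prod.ext_iff]

theorem dl_pol : dl p ∈ Pol (ZMod p) (2 * p - 1) := by
  have h2 := hp.out.two_le
  have a := Pol.mon (K := ZMod p) (d := 2 * p - 1) (i := 0) (j := 0) (by omega)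
  have b := Pol.mon (K := ZMod p) (d := 2 * p - 1) (i := p - 1) (j := 0) (by omega)
  have c := Pol.mon (K := ZMod p) (d := 2 * p - 1) (i := 0) (j := p - 1) (by omega)
  have d := Pol.mon (K := ZMod p) (d := 2 * p - 1) (i := p - 1) (j := p - 1) (by omega)
  convert Submodule.add_mem _ (Submodule.sub_mem _ (Submodule.sub_mem _ a b) c) d using 1
  funext x; simp [dl]; ring

variable {ι : Type*} [DecidableEq ι] {g : ι → ZMod p × ZMod p} {s : Finset ι}

/-- signed count of subset sums -/
def EE (g : ι → ZMod p × ZMod p) (B : Finset ι) (h : ZMod p × ZMod p) : ZMod p :=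
  ∑ A ∈ B.powerset, (-1) ^ A.card * dl p (h - ∑ i ∈ A, g i)

theorem EE_pol (g : ι → ZMod p × ZMod p) (B : Finset ι) : ∀ d, B.card + d = 2 * p - 1 →
    EE g B ∈ Pol (ZMod p) d := by
  induction B using Finset.induction_on with
  | empty =>
    intro d hd
    have : EE g ∅ = dl p := by funext h; simp [EE]
    rw [this]
    simp at hd
    rw [hd]; exact dl_pol
  | insert a B ha ih =>
    intro d hd
    rw [card_insert_of_notMem ha] at hd
    have h1 := Pol.diff (g a) (ih (d + 1) (by omega))
    convert h1 using 1
    funext h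
    simp only [EE]
    rw [Finset.sum_powerset_insert ha, sub_eq_add_neg, ← Finset.sum_neg_distrib]
    congr 1
    refine Finset.sum_congr rfl fun A hA => ?_
    have haA : a ∉ A := fun h => ha (mem_powerset.1 hA h)
    rw [card_insert_of_notMem haA, Finset.sum_insert haA, pow_succ, sub_sub]; ring

theorem EE_ne {B : Finset ι} {h : ZMod p × ZMod p} (hne : EE g B h ≠ 0) :
    ∃ A ⊆ B, ∑ i ∈ A, g i = h := by
  by_contra hc
  push Not at hc
  apply hne
  apply Finset.sum_eq_zero
  intro A hA
  rw [dl_eq, if_neg, mul_zero]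
  intro h0
  exact hc A (mem_powerset.1 hA) (sub_eq_zero.1 h0).symm

theorem EE_zero {B : Finset ι} (h : ∀ A ⊆ B, A.Nonempty → ∑ i ∈ A, g i ≠ 0) : EE g B 0 = 1 := by
  unfold EE
  rw [Finset.sum_eq_single ∅]
  · simp [dl_eq]
  · intro A hA hne
    rw [dl_eq, if_neg, mul_zero]
    intro h0
    exact h A (mem_powerset.1 hA) (nonempty_iff_ne_empty.2 hne) (by simpa using h0)
  · simp

theorem rank_lemma (hs : PU g s) {P R B : Finset ι} (hP : P ⊆ s) (hR : R ⊆ s) (hd : Disjoint P R)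
    (hm : MZ g P) {C : Finset (ZMod p × ZMod p)} (hC : GoodC g R C) (hB : B ⊆ P)
    (hBc : B.card < P.card) {n : ℕ} (hn : 2 * p ≤ 2 * n + B.card) (hb2 : B.card ≤ 2 * p - 1) :
    (P.card - B.card) * C.card ≤ n ^ 2 := by
  classical
  obtain ⟨T, hTm, hT, hTc⟩ := exists_chain (P \ B)
  have hPB : (P \ B).card = P.card - B.card := card_sdiff_of_subset hB
  have hE : EE g B ∈ Pol (ZMod p) (2 * n - 1) :=
    Pol.mono (by omega) (EE_pol g B (2 * p - 1 - B.card) (by omega))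
  have hD := Pol.dec hE
  set x : Fin (P.card - B.card) × C → ZMod p × ZMod p := fun a => ∑ i ∈ T a.1, g i + a.2.1 with hx
  have hproper : ∀ (i : Fin (P.card - B.card)) , ∀ A ⊆ B, ∀ S ⊆ T i, (A ∪ S) ⊂ P := by
    intro i A hA S hS
    have h1 : A ∪ S ⊆ P := union_subset (hA.trans hB) ((hS.trans (hT i)).trans sdiff_subset)
    refine h1.ssubset_of_ne ?_
    intro he
    have h2 := card_union_le A S
    have h3 := card_le_card hA
    have h4 := card_le_card hS
    rw [hTc i (by rw [hPB]; exact i.2.le)] at h4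
    have := i.2
    rw [he] at h2
    omega
  have key : ∀ a b, b.1 ≤ a.1 → EE g B (x b - x a) ≠ 0 → a = b := by
    rintro ⟨i, c⟩ ⟨j, c'⟩ hle hne
    simp only at hle
    obtain ⟨A, hA, eA⟩ := EE_ne hne
    have hsub := hTm (show (j : ℕ) ≤ i from hle)
    have e1 : ∑ k ∈ T i, g k = ∑ k ∈ T i \ T j, g k + ∑ k ∈ T j, g k := (Finset.sum_sdiff hsub).symm
    obtain ⟨S, hS, eS⟩ := hC c.1 c.2 c'.1 c'.2
    have hdis : Disjoint A (T i \ T j) := by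
      rw [Finset.disjoint_left]
      intro y hy hy2
      have := hT i (mem_sdiff.1 hy2).1
      exact (mem_sdiff.1 this).2 (hA hy)
    have hzero : ∑ k ∈ A ∪ (T i \ T j), g k + ∑ k ∈ S, g k = 0 := by
      rw [Finset.sum_union hdis, eA, eS]
      simp only [hx]
      rw [e1]; abel
    have hpr := hproper i A hA (T i \ T j) sdiff_subset
    have := hs.split hP hR hd hm.2.1 hpr.1 hS hzero
    have hemp : A ∪ (T i \ T j) = ∅ := by
      by_contra hne
      exact hm.2.2 _ hpr (nonempty_iff_ne_empty.2 hne) this.1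
    have hTij : T i = T j := by
      have h3 : T i \ T j = ∅ := (union_eq_empty.1 hemp).2
      exact (sdiff_eq_empty_iff_subset.1 h3).antisymm hsub
    have hij : i = j := by
      have h1 := hTc i (by rw [hPB]; exact i.2.le)
      have h2 := hTc j (by rw [hPB]; exact j.2.le)
      rw [hTij] at h1
      exact Fin.ext (by omega)
    have hcc : c = c' := by
      rw [this.2] at eS
      exact Subtype.ext (sub_eq_zero.1 eS.symm)
    rw [hij, hcc]
  have hdiag : EE g B 0 = 1 := by
    apply EE_zero
    intro A hA hne
    refine hm.2.2 A ?_ hne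
    refine (hA.trans hB).ssubset_of_ne ?_
    intro he; have := card_le_card hA; rw [he] at this; omega
  have := hD.card_le x ?_
  · simpa using this
  · intro v hv
    by_contra hv0
    obtain ⟨a0, ha0⟩ : ∃ a, v a ≠ 0 := by
      by_contra hall; push Not at hall; exact hv0 (funext hall)
    obtain ⟨a, ha, hmax⟩ := Finset.exists_max_image (univ.filter (fun a => v a ≠ 0)) (fun a => a.1)
      ⟨a0, by simpa using ha0⟩
    have h1 := hv a
    rw [Finset.sum_eq_single a] at h1
    · simp only [sub_self, hdiag, one_mul] at h1
      exact (mem_filter.1 ha).2 h1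
    · intro b _ hba
      by_cases hvb : v b = 0
      · simp [hvb]
      · have hle := hmax b (by simpa using hvb)
        have : EE g B (x b - x a) = 0 := by
          by_contra hne
          exact hba (key a b hle hne).symm
        rw [this, zero_mul]
    · simp
end zp


section cp2
variable {p : ℕ} [hp : Fact p.Prime] {ι : Type*} [DecidableEq ι] {g : ι → ZMod p × ZMod p} {s : Finset ι}

theorem good_empty {G : Type*} [AddCommGroup G] (g : ι → G) : GoodC g ∅ {0} := by
  intro c hc c' hc'
  simp only [mem_singleton] at hc hc'
  subst hc; subst hc'
  exact ⟨∅, by simp, by simp⟩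

theorem core_arith {p a v w : ℕ} (hp : 2 < p) (h : a + v + w = 2 * p + 1) (ha2 : 2 ≤ a) (hap : a ≤ p)
    (hv : p + 1 ≤ a + v) (hw : p + 1 ≤ a + w) (hv2 : 2 ≤ v) (hw2 : 2 ≤ w) (hle : a * v * w ≤ p ^ 2) :
    False := by
  rcases hap.eq_or_lt with rfl | hlt
  · have h1 : 2 * (a - 1) ≤ v * w := by
      obtain ⟨v', rfl⟩ := Nat.exists_eq_add_of_le hv2
      obtain ⟨w', rfl⟩ := Nat.exists_eq_add_of_le hw2
      have : a = v' + w' + 3 := by omega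
      subst this
      have : v' + w' + 3 - 1 = v' + w' + 2 := by omega
      rw [this]; nlinarith
    have h2 : a < v * w := by omega
    have h3 : a * a < a * (v * w) := Nat.mul_lt_mul_of_pos_left h2 (by omega)
    nlinarith
  · obtain ⟨c, hc⟩ : ∃ c, a + c = p + 1 := ⟨p + 1 - a, by omega⟩
    have hc2 : 2 ≤ c := by omega
    obtain ⟨v', rfl⟩ := Nat.exists_eq_add_of_le (show c ≤ v by omega)
    obtain ⟨w', rfl⟩ := Nat.exists_eq_add_of_le (show c ≤ w by omega)
    have hpe : p = c + v' + w' := by omega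
    have h1 : c * p ≤ (c + v') * (c + w') := by rw [hpe]; nlinarith [Nat.zero_le (v' * w')]
    have h2 : p < a * c := by
      obtain ⟨a', rfl⟩ := Nat.exists_eq_add_of_le ha2
      obtain ⟨c', rfl⟩ := Nat.exists_eq_add_of_le hc2
      have : p = a' + c' + 3 := by omega
      rw [this]
      nlinarith
    have h3 : p * p < (a * c) * p := Nat.mul_lt_mul_of_pos_right h2 (by omega)
    have h4 : a * (c * p) ≤ a * ((c + v') * (c + w')) := Nat.mul_le_mul_left _ h1
    nlinarith

theorem core (hp2 : 2 < p) (h : PU g s) (h0 : ∑ i ∈ s, g i = 0) (hc : s.card = 2 * p + 1) : False := by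
  by_cases hcase : ∃ P ⊆ s, MZ g P ∧ p ≤ P.card
  · obtain ⟨P, hP, hm, hPc⟩ := hcase
    have hsum := card_sdiff_add_card_eq_card hP
    rcases (s \ P).eq_empty_or_nonempty with he | hne
    · rw [he] at hsum
      simp only [card_empty] at hsum
      obtain ⟨B, hB, hBc⟩ := exists_subset_card_eq (show 2 * p - 2 ≤ P.card by omega)
      have := rank_lemma h hP (empty_subset _) (disjoint_empty_right _) hm (good_empty g) hB (by omega)
        (n := 1) (by omega) (by omega)
      simp only [card_singleton] at this
      omega
    · have hz := sum_sdiff_zero hP h0 hm.2.1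
      have hy := two_le_card hne (h.mono sdiff_subset).1 hz
      obtain ⟨C, hC, hCc⟩ := (h.mono sdiff_subset).exists_good hz hne
      obtain ⟨n, hn⟩ : ∃ n, (s \ P).card = n + 1 := ⟨(s \ P).card - 1, by omega⟩
      obtain ⟨B, hB, hBc⟩ := exists_subset_card_eq (show 2 * p - 2 * n ≤ P.card by omega)
      have := rank_lemma h hP sdiff_subset disjoint_sdiff hm hC hB (by omega)
        (n := n) (by omega) (by omega)
      rw [show P.card - B.card = n by omega] at this
      have h3 : n * (n + 1) ≤ n * C.card := Nat.mul_le_mul_left _ (by omega)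
      nlinarith
  · push Not at hcase
    have hsne : s.Nonempty := by rw [← card_pos]; omega
    obtain ⟨P0, hP0, hm0⟩ := exists_MZ hsne h0
    have hP0c := hcase P0 hP0 hm0
    obtain ⟨U, hU, hmax⟩ := exists_max_image (s.powerset.filter (fun U => ∑ i ∈ U, g i = 0 ∧ U.card ≤ p))
      Finset.card ⟨P0, by simp [hP0, hm0.2.1, hP0c.le]⟩
    simp only [mem_filter, mem_powerset] at hU hmax
    obtain ⟨hUs, hU0, hUp⟩ := hU
    have ha2 : 2 ≤ U.card := by
      have h1 := hmax P0 ⟨hP0, hm0.2.1, hP0c.le⟩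
      have h2 := two_le_card hm0.1 (h.mono hP0).1 hm0.2.1
      omega
    have hW0 := sum_sdiff_zero hUs h0 hU0
    have hWc := card_sdiff_add_card_eq_card hUs
    obtain ⟨V, hV, hVm⟩ := exists_MZ (show (s \ U).Nonempty by rw [← card_pos]; omega) hW0
    have hVs : V ⊆ s := hV.trans sdiff_subset
    have hVp := hcase V hVs hVm
    have hX0 := sum_sdiff_zero hV hW0 hVm.2.1
    have hXc := card_sdiff_add_card_eq_card hV
    have hXs : (s \ U) \ V ⊆ s := sdiff_subset.trans sdiff_subset
    have hXne : ((s \ U) \ V).Nonempty := by rw [← card_pos]; omega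
    have hv2 := two_le_card hVm.1 (h.mono hVs).1 hVm.2.1
    have hw2 := two_le_card hXne (h.mono hXs).1 hX0
    have hdUV : Disjoint U V := disjoint_of_subset_right hV disjoint_sdiff
    have hdUX : Disjoint U ((s \ U) \ V) := disjoint_of_subset_right sdiff_subset disjoint_sdiff
    have big : ∀ V' ⊆ s, Disjoint U V' → ∑ i ∈ V', g i = 0 → 2 ≤ V'.card → p + 1 ≤ U.card + V'.card := by
      intro V' hV' hd hz h2
      by_contra hlt
      have := hmax (U ∪ V') ⟨union_subset hUs hV', by rw [sum_union hd, hU0, hz, add_zero],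
        by rw [card_union_of_disjoint hd]; omega⟩
      rw [card_union_of_disjoint hd] at this
      omega
    obtain ⟨C1, hC1, c1⟩ := (h.mono hUs).exists_good hU0 (card_pos.1 (by omega))
    obtain ⟨C2, hC2, c2⟩ := (h.mono hVs).exists_good hVm.2.1 hVm.1
    obtain ⟨C3, hC3, c3⟩ := (h.mono hXs).exists_good hX0 hXne
    obtain ⟨C4, hC4, c4⟩ := GoodC.prod h hVs hXs disjoint_sdiff hVm.2.1 hC2 hC3
    obtain ⟨C5, hC5, c5⟩ := GoodC.prod h hUs (union_subset hVs hXs)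
      (disjoint_union_right.2 ⟨hdUV, hdUX⟩) hU0 hC1 hC4
    have hle := hC5.card_le (⊤ : AddSubgroup (ZMod p × ZMod p)) (by simp)
    have hcard : Nat.card (⊤ : AddSubgroup (ZMod p × ZMod p)) = p ^ 2 := by
      rw [AddSubgroup.card_top, Nat.card_prod, Nat.card_zmod, sq]
    rw [hcard, c5, c4] at hle
    have hfin : U.card * V.card * ((s \ U) \ V).card ≤ p ^ 2 := by
      refine le_trans ?_ hle
      rw [mul_assoc]
      exact Nat.mul_le_mul c1 (Nat.mul_le_mul c2 c3)
    exact core_arith hp2 (by omega) ha2 hUp (big V hVs hdUV hVm.2.1 hv2) (big _ hXs hdUX hX0 hw2) hv2 hw2 hfin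

theorem two_tors (hp2 : 2 < p) {x : ZMod p × ZMod p} (h : x + x = 0) : x = 0 := by
  have h2 : (2 : ZMod p) ≠ 0 := by
    intro h
    have : ((2 : ℕ) : ZMod p) = 0 := by exact_mod_cast h
    rw [ZMod.natCast_eq_zero_iff] at this
    exact absurd (Nat.le_of_dvd (by norm_num) this) (by omega)
  have k : ∀ u : ZMod p, u + u = 0 → u = 0 := by
    intro u hu
    have : 2 * u = 0 := by rw [two_mul]; exact hu
    exact (mul_eq_zero.1 this).resolve_left h2
  exact Prod.ext (k _ (congrArg Prod.fst h)) (k _ (congrArg Prod.snd h))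

theorem N1_zs (hp2 : 2 < p) : ∀ (n : ℕ) (g : ι → ZMod p × ZMod p) (s : Finset ι), s.card = n →
    PU g s → ∑ i ∈ s, g i = 0 → s.card ≤ 2 * p := by
  intro n
  induction n using Nat.strong_induction_on with
  | _ n ih =>
    intro g s hn h h0
    by_contra hc
    by_cases he : s.card = 2 * p + 1
    · exact core hp2 h h0 he
    obtain ⟨i, hi, j, hj, hij, hsum⟩ : ∃ i ∈ s, ∃ j ∈ s, i ≠ j ∧ g i + g j ≠ 0 := by
      obtain ⟨i, j, k, hi, hj, hk, hij, hik, hjk⟩ := two_lt_card_iff.1 (show 2 < s.card by omega)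
      by_contra hall
      push Not at hall
      have h1 := hall i hi j hj hij
      have h2 := hall i hi k hk hik
      have h3 := hall j hj k hk hjk
      have h4 : g j = g k := add_left_cancel (h1.trans h2.symm)
      rw [h4] at h3
      exact h.1 k hk (two_tors hp2 h3)
    have hJ : ({i, j} : Finset ι) ⊆ s := by
      intro x hx; simp at hx; rcases hx with rfl | rfl <;> assumption
    have hsJ : ∑ x ∈ ({i, j} : Finset ι), g x ≠ 0 := by rw [sum_pair hij]; exact hsum
    have hm := h.merge hJ (mem_insert_self i _) hsJ
    have ht := merge_total (g := g) hJ (mem_insert_self i _)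
    have hcard := merge_card hJ (mem_insert_self i _)
    rw [card_pair hij] at hcard
    have := ih _ (by omega) _ _ rfl hm (by rw [ht, h0])
    omega

theorem N1_cp2 (hp2 : 2 < p) (h : PU g s) : s.card ≤ 2 * p := by
  by_cases h0 : ∑ i ∈ s, g i = 0
  · exact N1_zs hp2 _ g s rfl h h0
  · obtain ⟨g', s', h1, h2, h3, -, -⟩ := h.complete h0
    have := N1_zs hp2 _ g' s' rfl h1 h2
    omega

theorem dav_cp2 (h : ZF g s) : s.card ≤ 2 * p - 2 := by
  by_contra hc
  have hne : s.Nonempty := by rw [← card_pos]; omega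
  obtain ⟨g', s', h1, h2, h3, h4, -⟩ := h.pu.complete (h s Subset.rfl hne)
  obtain ⟨B, hB, hBc⟩ := exists_subset_card_eq (show 2 * p - 2 ≤ s'.card by omega)
  have := rank_lemma h1 Subset.rfl (empty_subset _) (disjoint_empty_right _) (h4 h) (good_empty g') hB (by omega)
        (n := 1) (by omega) (by omega)
  simp only [card_singleton] at this
  omega
end cp2


section transfer
variable {ι G G' : Type*} [DecidableEq ι] [AddCommGroup G] [AddCommGroup G'] {g : ι → G} {s : Finset ι}

theorem PU.hom (h : PU g s) (f : G →+ G') (h1 : ∀ A ⊆ s, ∑ i ∈ A, f (g i) = 0 → ∑ i ∈ A, g i = 0) :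
    PU (fun i => f (g i)) s := by
  constructor
  · intro i hi h0
    have := h1 {i} (by simpa using hi) (by simpa using h0)
    exact h.1 i hi (by simpa using this)
  · intro A hA B hB hA0 hB0
    have := h.2 A hA B hB (h1 A hA hA0) (h1 B hB hB0)
    rw [← map_sum, this, map_zero]

theorem ZF.hom (h : ZF g s) (f : G →+ G') (h1 : ∀ A ⊆ s, ∑ i ∈ A, f (g i) = 0 → ∑ i ∈ A, g i = 0) :
    ZF (fun i => f (g i)) s := fun A hA hne h0 => h A hA hne (h1 A hA h0)

theorem PU.of_hom (f : G →+ G') (hf : Function.Injective f) (h : PU (fun i => f (g i)) s) : PU g s := by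
  constructor
  · intro i hi h0
    exact h.1 i hi (by simp [h0])
  · intro A hA B hB hA0 hB0
    have := h.2 A hA B hB (by rw [← map_sum, hA0, map_zero]) (by rw [← map_sum, hB0, map_zero])
    rw [← map_sum] at this
    exact (map_eq_zero_iff f hf).1 this

theorem ZF.of_hom (f : G →+ G') (h : ZF (fun i => f (g i)) s) : ZF g s := 
  fun A hA hne h0 => h A hA hne (by rw [← map_sum, h0, map_zero])

theorem PU.congr {g' : ι → G} (h : PU g s) (he : ∀ i ∈ s, g i = g' i) : PU g' s := by
  have key : ∀ A ⊆ s, ∑ i ∈ A, g' i = ∑ i ∈ A, g i := fun A hA =>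
    sum_congr rfl fun i hi => (he i (hA hi)).symm
  refine ⟨fun i hi => he i hi ▸ h.1 i hi, fun A hA B hB h1 h2 => ?_⟩
  rw [key _ hA] at h1
  rw [key _ hB] at h2
  rw [key _ (inter_subset_left.trans hA)]
  exact h.2 A hA B hB h1 h2

theorem ZF.congr {g' : ι → G} (h : ZF g s) (he : ∀ i ∈ s, g i = g' i) : ZF g' s := by
  intro A hA hne h0
  refine h A hA hne ?_
  rw [← h0]
  exact sum_congr rfl fun i hi => he i (hA hi)
end transfer

/-- the weight of an element -/
noncomputable def wt {G : Type*} [AddCommGroup G] (x : G) : ℝ := 1 / (addOrderOf x : ℝ)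

section pgroup
variable {p m : ℕ} [hp : Fact p.Prime] {ι : Type*} [DecidableEq ι]

theorem wt_ge {G : Type*} [AddCommGroup G] {x : G} {n : ℕ} (hn : 0 < n) (h : n • x = 0) :
    1 / (n : ℝ) ≤ wt x := by
  have h1 := addOrderOf_dvd_iff_nsmul_eq_zero.2 h
  have h2 : 0 < addOrderOf x := Nat.pos_of_dvd_of_pos h1 hn
  have h3 := Nat.le_of_dvd hn h1
  unfold wt
  apply one_div_le_one_div_of_le
  · exact_mod_cast h2
  · exact_mod_cast h3

/-- no further merging possible -/
def Stuck (p : ℕ) {G : Type*} [AddCommGroup G] (g : ι → G) (s : Finset ι) : Prop :=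
  ∀ j, 2 ≤ j → ∀ J ⊆ s, J.Nonempty → (∀ i ∈ J, addOrderOf (g i) = p ^ j) → J.card ≤ p →
    p ^ (j - 1) • ∑ i ∈ J, g i = 0 → ∑ i ∈ J, g i = 0

theorem exists_stuck {G : Type*} [AddCommGroup G] (n : ℕ) : ∀ (g : ι → G) (s : Finset ι),
    s.card = n → PU g s → ∃ (g' : ι → G) (s' : Finset ι), PU g' s' ∧ (ZF g s → ZF g' s') ∧
      Stuck p g' s' ∧ ∑ i ∈ s, wt (g i) ≤ ∑ i ∈ s', wt (g' i) := by
  have hp1 := hp.out.one_lt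
  induction n using Nat.strong_induction_on with
  | _ n ih =>
    intro g s hn h
    by_cases hst : Stuck p g s
    · exact ⟨g, s, h, id, hst, le_rfl⟩
    unfold Stuck at hst
    push Not at hst
    obtain ⟨j, hj2, J, hJ, ⟨k, hk⟩, hord, hcard, hz, hnz⟩ := hst
    have hJ2 : 2 ≤ J.card := by
      by_contra hlt
      have h1 : J.card = 1 := by have := card_pos.2 ⟨k, hk⟩; omega
      obtain ⟨a, rfl⟩ := card_eq_one.1 h1
      simp only [sum_singleton] at hz
      have h2 := addOrderOf_dvd_iff_nsmul_eq_zero.2 hz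
      rw [hord a (by simp)] at h2
      have := (Nat.pow_dvd_pow_iff_le_right hp1).1 h2
      omega
    have hc := merge_card hJ hk
    obtain ⟨g', s', a, b, c, d⟩ := ih _ (by omega) _ _ rfl (h.merge hJ hk hnz)
    refine ⟨g', s', a, fun hz => b (hz.merge hJ hk), c, le_trans ?_ d⟩
    rw [merge_weight wt hk, ← sum_sdiff hJ, add_comm]
    gcongr
    have h1 : ∑ i ∈ J, wt (g i) = J.card * (1 / (p : ℝ) ^ j) := by
      rw [sum_congr rfl (g := fun _ => 1 / (p : ℝ) ^ j), sum_const, nsmul_eq_mul]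
      intro i hi
      rw [wt, hord i hi]; push_cast; rfl
    have h2 := wt_ge (pow_pos hp.out.pos _) hz
    refine le_trans ?_ h2
    rw [h1]
    have hp0 : (0 : ℝ) < p := by exact_mod_cast hp.out.pos
    have e : (p : ℝ) ^ j = p ^ (j - 1) * p := by rw [← pow_succ]; congr 1; omega
    push_cast
    rw [e, mul_one_div, div_le_div_iff₀ (by positivity) (by positivity)]
    have : (J.card : ℝ) ≤ p := by exact_mod_cast hcard
    have h5 : (0 : ℝ) < p ^ (j - 1) := by positivity
    nlinarith

theorem stuck_zero {G : Type*} [AddCommGroup G] {g : ι → G} {s : Finset ι} (hst : Stuck p g s) {j : ℕ}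
    (hj : 2 ≤ j) (K : AddSubgroup G) [Finite K] (hK : Nat.card K ≤ p)
    (hmem : ∀ i ∈ s, addOrderOf (g i) = p ^ j → p ^ (j - 1) • g i ∈ K) :
    ∀ A ⊆ s.filter (fun i => addOrderOf (g i) = p ^ j), ∑ i ∈ A, (nsmulAddMonoidHom (α := G) (p ^ (j - 1))) (g i) = 0 →
      ∑ i ∈ A, g i = 0 := by
  have hp1 := hp.out.one_lt
  intro A
  induction A using Finset.strongInduction with
  | H A ih =>
    intro hA h0
    rcases A.eq_empty_or_nonempty with rfl | hne
    · simp
    obtain ⟨P, hP, hm⟩ := exists_MZ hne h0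
    have hfil : ∀ i ∈ A, i ∈ s ∧ addOrderOf (g i) = p ^ j := fun i hi => by simpa using hA hi
    have hPc : P.card ≤ p := by
      refine le_trans ((hm.pu ?_).card_le K ?_) hK
      · intro i hi h0
        obtain ⟨_, ho⟩ := hfil i (hP hi)
        have h2 := addOrderOf_dvd_iff_nsmul_eq_zero.2 (show p ^ (j - 1) • g i = 0 from h0)
        rw [ho] at h2
        have := (Nat.pow_dvd_pow_iff_le_right hp1).1 h2
        omega
      · intro i hi
        exact hmem i (hfil i (hP hi)).1 (hfil i (hP hi)).2
    have hP0 : ∑ i ∈ P, g i = 0 := by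
      refine hst j hj P (fun i hi => (hfil i (hP hi)).1) hm.1 (fun i hi => (hfil i (hP hi)).2) hPc ?_
      have := hm.2.1
      rw [← map_sum] at this
      exact this
    have h3 := ih (A \ P) (sdiff_ssubset hP hm.1) (sdiff_subset.trans hA) (sum_sdiff_zero hP h0 hm.2.1)
    rw [← sum_sdiff hP, h3, hP0, add_zero]

/-- the subgroup of `p`-torsion in the first factor -/
def KK (p m : ℕ) : AddSubgroup (ZMod (p ^ m) × ZMod p) where
  carrier := {h | p • h.1 = 0 ∧ h.2 = 0}
  add_mem' := by
    rintro a b ⟨h1, h2⟩ ⟨h3, h4⟩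
    exact ⟨by rw [Prod.fst_add, nsmul_add, h1, h3, add_zero], by rw [Prod.snd_add, h2, h4, add_zero]⟩
  zero_mem' := by simp
  neg_mem' := by
    rintro a ⟨h1, h2⟩
    exact ⟨by rw [Prod.fst_neg, smul_neg, h1, neg_zero], by rw [Prod.snd_neg, h2, neg_zero]⟩

theorem KK_card : Nat.card (KK p m) ≤ p := by
  classical
  haveI : NeZero (p ^ m) := ⟨pow_ne_zero _ hp.out.ne_zero⟩
  have h1 := IsAddCyclic.card_nsmul_eq_zero_le (α := ZMod (p ^ m)) hp.out.pos
  refine le_trans ?_ h1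
  rw [← Fintype.card_coe, ← Nat.card_eq_fintype_card]
  refine Nat.card_le_card_of_injective
    (fun x : KK p m => (⟨x.1.1, by simpa using x.2.1⟩ : {a // a ∈ ({a : ZMod (p ^ m) | p • a = 0} : Finset _)})) ?_
  intro x y hxy
  simp only [Subtype.mk.injEq] at hxy
  exact Subtype.ext (Prod.ext hxy (x.2.2.trans y.2.2.symm))

/-- embedding of the elementary group -/
def psi (p m : ℕ) (hm : 1 ≤ m) : ZMod p × ZMod p →+ ZMod (p ^ m) × ZMod p :=
  AddMonoidHom.prodMap (ZMod.lift p ⟨(AddMonoidHom.mulLeft ((p : ZMod (p ^ m)) ^ (m - 1))).comp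
    (Int.castAddHom (ZMod (p ^ m))), by
      simp only [AddMonoidHom.coe_comp, Function.comp_apply, Int.coe_castAddHom, Int.cast_natCast,
        AddMonoidHom.coe_mulLeft]
      rw [← pow_succ, Nat.sub_add_cancel hm]
      exact_mod_cast ZMod.natCast_self (p ^ m)⟩) (AddMonoidHom.id _)

theorem psi_apply (hm : 1 ≤ m) (k : ℕ) (y : ZMod p) :
    psi p m hm ((k : ZMod p), y) = (((p ^ (m - 1) * k : ℕ) : ZMod (p ^ m)), y) := by
  have : ((k : ℕ) : ZMod p) = ((k : ℤ) : ZMod p) := by simp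
  rw [psi, AddMonoidHom.coe_prodMap, Prod.map_apply, this, ZMod.lift_coe]
  simp

theorem psi_inj (hm : 1 ≤ m) : Function.Injective (psi p m hm) := by
  rw [injective_iff_map_eq_zero]
  rintro ⟨x, y⟩ h
  obtain ⟨k, rfl⟩ := ZMod.natCast_zmod_surjective x
  rw [psi_apply] at h
  simp only [Prod.mk_eq_zero] at h
  refine Prod.ext ?_ h.2
  have h1 := (ZMod.natCast_eq_zero_iff _ _).1 h.1
  have e : p ^ m = p ^ (m - 1) * p := by rw [← pow_succ]; congr 1; omega
  rw [e] at h1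
  have h2 := Nat.dvd_of_mul_dvd_mul_left (pow_pos hp.out.pos _) h1
  exact (ZMod.natCast_eq_zero_iff _ _).2 h2

theorem psi_range (hm : 1 ≤ m) {h : ZMod (p ^ m) × ZMod p} (h0 : p • h = 0) :
    ∃ x, psi p m hm x = h := by
  haveI : NeZero (p ^ m) := ⟨pow_ne_zero _ hp.out.ne_zero⟩
  obtain ⟨x, y⟩ := h
  obtain ⟨k, rfl⟩ := ZMod.natCast_zmod_surjective x
  have h1 : ((p * k : ℕ) : ZMod (p ^ m)) = 0 := by
    have := congrArg Prod.fst h0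
    simpa using this
  rw [ZMod.natCast_eq_zero_iff] at h1
  have e : p ^ m = p * p ^ (m - 1) := by rw [← pow_succ']; congr 1; omega
  rw [e] at h1
  obtain ⟨l, hl⟩ := Nat.dvd_of_mul_dvd_mul_left hp.out.pos h1
  exact ⟨((l : ZMod p), y), by rw [psi_apply, hl]⟩

theorem psi_lift (hm : 1 ≤ m) {g : ι → ZMod (p ^ m) × ZMod p} {s : Finset ι}
    (h1 : ∀ i ∈ s, p • g i = 0) : ∃ g' : ι → ZMod p × ZMod p, ∀ i ∈ s, g i = psi p m hm (g' i) := by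
  refine ⟨fun i => if h : i ∈ s then (psi_range hm (h1 i h)).choose else 0, fun i hi => ?_⟩
  simp only [hi, dif_pos]
  exact (psi_range hm (h1 i hi)).choose_spec.symm

theorem H_pu1 (hm : 1 ≤ m) (hp2 : 2 < p) {g : ι → ZMod (p ^ m) × ZMod p} {s : Finset ι}
    (h1 : ∀ i ∈ s, p • g i = 0) (h : PU g s) : s.card ≤ 2 * p := by
  obtain ⟨g', hg'⟩ := psi_lift hm h1
  exact N1_cp2 hp2 ((h.congr hg').of_hom _ (psi_inj hm))

theorem H_zf1 (hm : 1 ≤ m) {g : ι → ZMod (p ^ m) × ZMod p} {s : Finset ι}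
    (h1 : ∀ i ∈ s, p • g i = 0) (h : ZF g s) : s.card ≤ 2 * p - 2 := by
  obtain ⟨g', hg'⟩ := psi_lift hm h1
  exact dav_cp2 ((h.congr hg').of_hom _)

theorem H_ord (hm : 1 ≤ m) (h : ZMod (p ^ m) × ZMod p) : ∃ j ≤ m, addOrderOf h = p ^ j := by
  refine (Nat.dvd_prime_pow hp.out).1 ?_
  rw [addOrderOf_dvd_iff_nsmul_eq_zero]
  refine Prod.ext ?_ ?_
  · have := ZMod.natCast_self (p ^ m)
    push_cast at this
    simp [this]
  · obtain ⟨k, rfl⟩ : ∃ k, m = k + 1 := ⟨m - 1, by omega⟩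
    simp

theorem H_level (hm : 1 ≤ m) {g : ι → ZMod (p ^ m) × ZMod p} {s : Finset ι} (h : ∀ i ∈ s, g i ≠ 0)
    (c : ℕ → ℝ) (hc : ∀ j, 1 ≤ j → ((s.filter (fun i => addOrderOf (g i) = p ^ j)).card : ℝ) ≤ c j) :
    ∑ i ∈ s, wt (g i) ≤ ∑ j ∈ Icc 1 m, c j / (p : ℝ) ^ j := by
  have hp1 := hp.out.one_lt
  have hmap : ∀ i ∈ s, Nat.log p (addOrderOf (g i)) ∈ Icc 1 m := by
    intro i hi
    obtain ⟨j, hj, e⟩ := H_ord hm (g i)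
    rw [e, Nat.log_pow hp1, mem_Icc]
    refine ⟨?_, hj⟩
    by_contra hlt
    have : j = 0 := by omega
    rw [this, pow_zero, AddMonoid.addOrderOf_eq_one_iff] at e
    exact h i hi e
  rw [← sum_fiberwise_of_maps_to hmap]
  refine sum_le_sum fun j hj => ?_
  have hfe : s.filter (fun i => Nat.log p (addOrderOf (g i)) = j) =
      s.filter (fun i => addOrderOf (g i) = p ^ j) := by
    ext i
    simp only [mem_filter, and_congr_right_iff]
    intro hi
    obtain ⟨k, hk, e⟩ := H_ord hm (g i)
    rw [e, Nat.log_pow hp1]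
    exact ⟨fun h => by rw [h], fun h => Nat.pow_right_injective hp1 h⟩
  rw [hfe]
  have : ∑ i ∈ s.filter (fun i => addOrderOf (g i) = p ^ j), wt (g i) =
      (s.filter (fun i => addOrderOf (g i) = p ^ j)).card * (1 / (p : ℝ) ^ j) := by
    rw [sum_congr rfl (g := fun _ => 1 / (p : ℝ) ^ j), sum_const, nsmul_eq_mul]
    intro i hi
    rw [wt, (mem_filter.1 hi).2]; push_cast; rfl
  rw [this, mul_one_div]
  have hp0 : (0 : ℝ) < p := by exact_mod_cast hp.out.pos
  have := hc j (mem_Icc.1 hj).1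
  gcongr

theorem H_mem {j : ℕ} (hj : 2 ≤ j) (h : ZMod (p ^ m) × ZMod p) (ho : addOrderOf h = p ^ j) :
    p ^ (j - 1) • h ∈ KK p m := by
  obtain ⟨k, rfl⟩ : ∃ k, j = k + 2 := ⟨j - 2, by omega⟩
  have h1 : p ^ (k + 2) • h = 0 := by rw [← ho]; exact addOrderOf_nsmul_eq_zero h
  constructor
  · have := congrArg Prod.fst h1
    rw [show k + 2 - 1 = k + 1 by omega, Prod.smul_fst, ← mul_smul, ← pow_succ']
    exact this
  · rw [show k + 2 - 1 = k + 1 by omega, Prod.smul_snd, pow_succ, mul_smul]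
    simp

theorem H_PU (hm : 1 ≤ m) (hp2 : 2 < p) {g : ι → ZMod (p ^ m) × ZMod p} {s : Finset ι} (h : PU g s) :
    ∑ i ∈ s, wt (g i) ≤ 1 + ∑ j ∈ Icc 1 m, (p : ℝ) / p ^ j := by
  haveI : NeZero (p ^ m) := ⟨pow_ne_zero _ hp.out.ne_zero⟩
  obtain ⟨g', s', h', -, hst, hle⟩ := exists_stuck (p := p) _ g s rfl h
  refine hle.trans ?_
  refine (H_level hm h'.1 (fun j => p + if j = 1 then (p : ℝ) else 0) ?_).trans ?_
  · intro j hj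
    by_cases hj1 : j = 1
    · subst hj1
      have := H_pu1 hm hp2 (s := s'.filter (fun i => addOrderOf (g' i) = p ^ 1)) (g := g') ?_ (h'.mono (filter_subset _ _))
      · rw [if_pos rfl, ← two_mul]; exact_mod_cast this
      · intro i hi
        have e := (mem_filter.1 hi).2
        rw [pow_one] at e
        exact addOrderOf_dvd_iff_nsmul_eq_zero.1 (by rw [e])
    · have hz := stuck_zero hst (show 2 ≤ j by omega) (KK p m) KK_card (fun i _ ho => H_mem (by omega) _ ho)
      have := ((h'.mono (filter_subset _ _)).hom _ hz).card_le (KK p m) ?_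
      · rw [if_neg hj1, add_zero]; exact_mod_cast this.trans KK_card
      · intro i hi
        exact H_mem (by omega) _ (mem_filter.1 hi).2
  · simp only [add_div, sum_add_distrib]
    rw [add_comm]
    gcongr
    rw [sum_eq_single 1]
    · have hp0 : (p : ℝ) ≠ 0 := by exact_mod_cast hp.out.ne_zero
      simp [hp0]
    · intro j _ hj; simp [hj]
    · intro hh; exact absurd (mem_Icc.2 ⟨le_rfl, hm⟩) hh

theorem H_ZF (hm : 1 ≤ m) {g : ι → ZMod (p ^ m) × ZMod p} {s : Finset ι} (h : ZF g s) :
    ∑ i ∈ s, wt (g i) ≤ ((p : ℝ) - 1) / p + ∑ j ∈ Icc 1 m, ((p : ℝ) - 1) / p ^ j := by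
  haveI : NeZero (p ^ m) := ⟨pow_ne_zero _ hp.out.ne_zero⟩
  have hp1 := hp.out.one_lt
  obtain ⟨g', s', h', hz', hst, hle⟩ := exists_stuck (p := p) _ g s rfl h.pu
  have hz' := hz' h
  refine hle.trans ?_
  refine (H_level hm h'.1 (fun j => ((p : ℝ) - 1) + if j = 1 then (p : ℝ) - 1 else 0) ?_).trans ?_
  · intro j hj
    have e1 : (p : ℝ) - 1 = ((p - 1 : ℕ) : ℝ) := by rw [Nat.cast_sub hp1.le]; simp
    rw [e1]
    by_cases hj1 : j = 1
    · subst hj1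
      have := H_zf1 hm (s := s'.filter (fun i => addOrderOf (g' i) = p ^ 1)) (g := g') ?_ (hz'.mono (filter_subset _ _))
      · rw [if_pos rfl]
        have e2 : 2 * p - 2 = (p - 1) + (p - 1) := by omega
        rw [e2] at this
        exact_mod_cast this
      · intro i hi
        have e := (mem_filter.1 hi).2
        rw [pow_one] at e
        exact addOrderOf_dvd_iff_nsmul_eq_zero.1 (by rw [e])
    · have hz := stuck_zero hst (show 2 ≤ j by omega) (KK p m) KK_card (fun i _ ho => H_mem (by omega) _ ho)
      have := ((hz'.mono (filter_subset _ _)).hom _ hz).card_lt (KK p m) ?_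
      · rw [if_neg hj1, add_zero]
        have h3 := this.trans_le KK_card
        have h4 : (s'.filter (fun i => addOrderOf (g' i) = p ^ j)).card ≤ p - 1 := by omega
        exact_mod_cast h4
      · intro i hi
        exact H_mem (by omega) _ (mem_filter.1 hi).2
  · simp only [add_div, sum_add_distrib]
    rw [add_comm]
    gcongr
    rw [sum_eq_single 1]
    · simp
    · intro j _ hj; simp [hj]
    · intro hh; exact absurd (mem_Icc.2 ⟨le_rfl, hm⟩) hh
end pgroup


section Gpart
variable {r p m : ℕ} [hp : Fact p.Prime] [hr : Fact r.Prime] {ι : Type*} [DecidableEq ι]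

theorem geo1 (m : ℕ) {x : ℝ} (hx : x ≠ 0) : ∑ j ∈ Icc 1 m, (x - 1) / x ^ j = 1 - 1 / x ^ m := by
  induction m with
  | zero => simp
  | succ m ih =>
    rw [sum_Icc_succ_top (by omega), ih]
    field_simp
    ring

theorem geo2 {m : ℕ} (hm : 1 ≤ m) {x : ℝ} (hx : 1 < x) :
    ∑ j ∈ Icc 1 m, x / x ^ j = (x ^ m - 1) / (x ^ m - x ^ (m - 1)) := by
  have h0 : x ≠ 0 := by positivity
  have h1 : x - 1 ≠ 0 := by linarith
  have e : ∑ j ∈ Icc 1 m, x / x ^ j = x / (x - 1) * ∑ j ∈ Icc 1 m, (x - 1) / x ^ j := by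
    rw [mul_sum]
    refine sum_congr rfl fun j _ => ?_
    field_simp
  rw [e, geo1 m h0]
  obtain ⟨k, rfl⟩ : ∃ k, m = k + 1 := ⟨m - 1, by omega⟩
  have h2 : x ^ (k + 1) - x ^ (k + 1 - 1) = x ^ k * (x - 1) := by
    rw [Nat.add_sub_cancel]; ring
  rw [h2]
  field_simp
  ring

theorem wt_le_snd {H : Type*} [AddCommGroup H] [Finite H] (x : ZMod r × H) : wt x ≤ wt x.2 := by
  have h1 : 0 < addOrderOf x.2 := addOrderOf_pos _
  have : NeZero r := ⟨hr.out.ne_zero⟩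
  have h2 : 0 < addOrderOf x := addOrderOf_pos _
  have h3 : addOrderOf x.2 ∣ addOrderOf x := by
    rw [addOrderOf_dvd_iff_nsmul_eq_zero, ← Prod.smul_snd, addOrderOf_nsmul_eq_zero, Prod.snd_zero]
  unfold wt
  apply one_div_le_one_div_of_le
  · exact_mod_cast h1
  · exact_mod_cast Nat.le_of_dvd h2 h3

theorem ord_zmod {a : ZMod r} (ha : a ≠ 0) : addOrderOf a = r := by
  apply addOrderOf_eq_prime _ ha
  simp

theorem wt_left {H : Type*} [AddCommGroup H] {x : ZMod r × H} (h2 : x.2 = 0) (h1 : x.1 ≠ 0) :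
    wt x = 1 / r := by
  rw [wt, Prod.addOrderOf, h2, addOrderOf_zero, Nat.lcm_one_right, ord_zmod h1]

theorem wt_right {H : Type*} [AddCommGroup H] {x : ZMod r × H} (h1 : x.1 = 0) :
    wt x = wt x.2 := by
  rw [wt, wt, Prod.addOrderOf, h1, addOrderOf_zero, Nat.lcm_one_left]

theorem wt_mixed (hm : 1 ≤ m) (hrp : r < p) {x : ZMod r × ZMod (p ^ m) × ZMod p} (h1 : x.1 ≠ 0) :
    wt x = 1 / r * wt x.2 := by
  obtain ⟨j, _, e⟩ := H_ord hm x.2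
  have hc : Nat.Coprime r (p ^ j) := by
    apply Nat.Coprime.pow_right
    rw [Nat.coprime_primes hr.out hp.out]
    omega
  rw [wt, wt, Prod.addOrderOf, e, ord_zmod h1, hc.lcm_eq_mul]
  push_cast
  rw [one_div_mul_one_div]

theorem ZF_fill {g : ι → ZMod r} {s : Finset ι} (h : ZF g s) (hc : s.card + 1 = r) (c : ZMod r) :
    ∃ A ⊆ s, ∑ i ∈ A, g i = c := by
  have : NeZero r := ⟨hr.out.ne_zero⟩
  obtain ⟨T, hTm, hT, hTc⟩ := exists_chain s
  have hinj : ∀ i j, i < j → j ≤ s.card → ∑ x ∈ T i, g x ≠ ∑ x ∈ T j, g x := by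
    intro i j hij hj he
    have hsub := hTm hij.le
    rw [← sum_sdiff hsub] at he
    have h0 : ∑ x ∈ T j \ T i, g x = 0 := by simpa using he
    refine h _ (sdiff_subset.trans (hT j)) ?_ h0
    rw [← card_pos, card_sdiff_of_subset hsub, hTc _ hj, hTc _ (by omega)]
    omega
  have huniv : (range (s.card + 1)).image (fun i => ∑ x ∈ T i, g x) = univ := by
    apply eq_univ_of_card
    rw [card_image_of_injOn, card_range, ZMod.card, hc]
    intro i hi j hj he
    simp only [coe_range, Set.mem_Iio] at hi hj
    rcases lt_trichotomy i j with hl | hl | hl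
    · exact absurd he (hinj i j hl (by omega))
    · exact hl
    · exact absurd he.symm (hinj j i hl (by omega))
  have hcm : c ∈ (range (s.card + 1)).image (fun i => ∑ x ∈ T i, g x) := by rw [huniv]; simp
  obtain ⟨i, _, rfl⟩ := mem_image.1 hcm
  exact ⟨T i, hT i, rfl⟩

theorem fst_sum {H : Type*} [AddCommGroup H] (g : ι → ZMod r × H) (A : Finset ι) :
    (∑ i ∈ A, g i).1 = ∑ i ∈ A, (g i).1 := map_sum (AddMonoidHom.fst _ _) _ _
theorem snd_sum {H : Type*} [AddCommGroup H] (g : ι → ZMod r × H) (A : Finset ι) :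
    (∑ i ∈ A, g i).2 = ∑ i ∈ A, (g i).2 := map_sum (AddMonoidHom.snd _ _) _ _

/-- bound for zero-sum free sequences in the p-part -/
noncomputable def kH (p m : ℕ) : ℝ := ((p : ℝ) - 1) / p + ∑ j ∈ Icc 1 m, ((p : ℝ) - 1) / p ^ j

theorem card_S0 {H : Type*} [AddCommGroup H] {g : ι → ZMod r × H} {s : Finset ι} (h : ZF g s) (h0 : ∀ i ∈ s, (g i).2 = 0) :
    ZF (fun i => (g i).1) s ∧ s.card + 1 ≤ r := by
  have : NeZero r := ⟨hr.out.ne_zero⟩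
  have h1 : ZF (fun i => (g i).1) s := by
    apply h.hom (AddMonoidHom.fst (ZMod r) H)
    intro A hA hz
    refine Prod.ext ?_ ?_
    · rw [fst_sum]; exact hz
    · rw [snd_sum]; exact sum_eq_zero fun i hi => h0 i (hA hi)
  refine ⟨h1, ?_⟩
  have := h1.card_lt (⊤ : AddSubgroup (ZMod r)) (by simp)
  rw [AddSubgroup.card_top, Nat.card_zmod] at this
  omega

theorem G_ZF_a (hm : 1 ≤ m) {g : ι → ZMod r × ZMod (p ^ m) × ZMod p} {s : Finset ι}
    (h : ZF g s) (hc : (s.filter (fun i => (g i).2 = 0)).card + 1 = r) :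
    ∑ i ∈ s, wt (g i) ≤ ((r : ℝ) - 1) / r + kH p m := by
  have : NeZero (p ^ m) := ⟨pow_ne_zero _ hp.out.ne_zero⟩
  obtain ⟨hz, -⟩ := card_S0 (h.mono (filter_subset (fun i => (g i).2 = 0) s)) (fun i hi => (mem_filter.1 hi).2)
  rw [← sum_filter_add_sum_filter_not s (fun i => (g i).2 = 0)]
  have e1 : ∑ i ∈ s.filter (fun i => (g i).2 = 0), wt (g i) = ((r : ℝ) - 1) / r := by
    rw [sum_congr rfl (g := fun _ => 1 / (r : ℝ)), sum_const, nsmul_eq_mul, mul_one_div]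
    · congr 1
      have : ((s.filter (fun i => (g i).2 = 0)).card : ℝ) + 1 = r := by exact_mod_cast hc
      linarith
    · intro i hi
      obtain ⟨hi1, hi2⟩ := mem_filter.1 hi
      refine wt_left hi2 fun h1 => h.pu.1 i hi1 (Prod.ext h1 hi2)
  rw [e1]
  gcongr
  refine (sum_le_sum fun i _ => wt_le_snd (g i)).trans ?_
  refine H_ZF hm (g := fun i => (g i).2) ?_
  apply (h.mono (filter_subset _ _)).hom (AddMonoidHom.snd _ _)
  intro A hA hz0
  obtain ⟨B, hB, eB⟩ := ZF_fill hz hc (-∑ i ∈ A, (g i).1)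
  have hdis : Disjoint A B := by
    rw [disjoint_left]
    intro x hx hx2
    exact (mem_filter.1 (hA hx)).2 (mem_filter.1 (hB hx2)).2
  have hAB : ∑ i ∈ A ∪ B, g i = 0 := by
    rw [sum_union hdis]
    refine Prod.ext ?_ ?_
    · rw [Prod.fst_add, fst_sum, fst_sum, eB]; simp
    · rw [Prod.snd_add, snd_sum, snd_sum, sum_eq_zero fun i hi => (mem_filter.1 (hB hi)).2, add_zero]
      exact hz0
  have hemp : A ∪ B = ∅ := by
    by_contra hne
    exact h _ (union_subset (hA.trans (filter_subset _ _)) (hB.trans (filter_subset _ _))) (nonempty_iff_ne_empty.2 hne) hAB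
  rw [(union_eq_empty.1 hemp).1, sum_empty]

theorem G_ZF_stuck (hm : 1 ≤ m) (hrp : r < p) {g : ι → ZMod r × ZMod (p ^ m) × ZMod p} {s : Finset ι}
    (h : ZF g s) (hst : ∀ j, 1 ≤ j → ∀ J ⊆ s, J.Nonempty → J.card ≤ r → (∀ i ∈ J, (g i).1 ≠ 0 ∧ addOrderOf (g i).2 = p ^ j) →
      ∑ i ∈ J, (g i).1 ≠ 0) :
    ∑ i ∈ s, wt (g i) ≤ ((s.filter (fun i => (g i).2 = 0)).card : ℝ) / r + 1 / r + kH p m := by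
  have : NeZero (p ^ m) := ⟨pow_ne_zero _ hp.out.ne_zero⟩
  have : NeZero r := ⟨hr.out.ne_zero⟩
  have hp0 : (1 : ℝ) < p := by exact_mod_cast hp.out.one_lt
  rw [← sum_filter_add_sum_filter_not s (fun i => (g i).2 = 0)]
  have e1 : ∑ i ∈ s.filter (fun i => (g i).2 = 0), wt (g i) = ((s.filter (fun i => (g i).2 = 0)).card : ℝ) / r := by
    rw [sum_congr rfl (g := fun _ => 1 / (r : ℝ)), sum_const, nsmul_eq_mul, mul_one_div]
    · intro i hi
      obtain ⟨hi1, hi2⟩ := mem_filter.1 hi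
      refine wt_left hi2 fun h1 => h.pu.1 i hi1 (Prod.ext h1 hi2)
  rw [e1, add_assoc]
  gcongr
  set t := s.filter (fun i => ¬ (g i).2 = 0) with ht
  have hts : t ⊆ s := filter_subset _ _
  rw [← sum_filter_add_sum_filter_not t (fun i => (g i).1 = 0), add_comm]
  apply add_le_add
  · rw [sum_congr rfl (fun i hi => wt_mixed hm hrp (mem_filter.1 hi).2), ← mul_sum]
    have hr0 : (0 : ℝ) < r := by exact_mod_cast hr.out.pos
    have : ∑ i ∈ t.filter (fun i => ¬ (g i).1 = 0), wt (g i).2 ≤ 1 := by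
      refine (H_level hm (g := fun i => (g i).2) (s := t.filter (fun i => ¬ (g i).1 = 0))
        (fun i hi => (mem_filter.1 (mem_filter.1 hi).1).2) (fun _ => (p : ℝ) - 1) ?_).trans ?_
      · intro j hj
        set u := (t.filter (fun i => ¬ (g i).1 = 0)).filter (fun i => addOrderOf (g i).2 = p ^ j) with hu
        have hus : u ⊆ s := (filter_subset _ _).trans ((filter_subset _ _).trans hts)
        have hup : ∀ i ∈ u, (g i).1 ≠ 0 ∧ addOrderOf (g i).2 = p ^ j := fun i hi =>
          ⟨(mem_filter.1 (mem_filter.1 hi).1).2, (mem_filter.1 hi).2⟩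
        have huz : ZF (fun i => (g i).1) u := by
          intro A hA hne hz
          obtain ⟨P, hP, hPm⟩ := exists_MZ hne hz
          have hPu := hP.trans hA
          have hc := (hPm.pu (fun i hi => (hup i (hPu hi)).1)).card_le (⊤ : AddSubgroup (ZMod r)) (by simp)
          rw [AddSubgroup.card_top, Nat.card_zmod] at hc
          exact hst j hj P (hPu.trans hus) hPm.1 hc (fun i hi => hup i (hPu hi)) hPm.2.1
        have hc := huz.card_lt (⊤ : AddSubgroup (ZMod r)) (by simp)
        rw [AddSubgroup.card_top, Nat.card_zmod] at hc
        have : u.card + 1 ≤ p := by omega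
        have : (u.card : ℝ) + 1 ≤ p := by exact_mod_cast this
        linarith
      · rw [geo1 m (by positivity)]
        have : (0 : ℝ) ≤ 1 / (p : ℝ) ^ m := by positivity
        linarith
    calc _ ≤ 1 / (r : ℝ) * 1 := by gcongr
      _ = _ := by ring
  · rw [sum_congr rfl (fun i hi => wt_right (mem_filter.1 hi).2)]
    refine H_ZF hm (g := fun i => (g i).2) ?_
    apply (h.mono ((filter_subset _ _).trans hts)).hom (AddMonoidHom.snd _ _)
    intro A hA hz0
    refine Prod.ext ?_ ?_
    · rw [fst_sum]; exact sum_eq_zero fun i hi => (mem_filter.1 (hA hi)).2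
    · rw [snd_sum]; exact hz0

theorem G_ZF_b (hm : 1 ≤ m) (hrp : r < p) (n : ℕ) : ∀ (g : ι → ZMod r × ZMod (p ^ m) × ZMod p) (s : Finset ι),
    s.card = n → ZF g s →
    ∑ i ∈ s, wt (g i) ≤ ((s.filter (fun i => (g i).2 = 0)).card : ℝ) / r + 1 / r + kH p m := by
  have hp0 : (1 : ℝ) < p := by exact_mod_cast hp.out.one_lt
  have hr0 : (0 : ℝ) < r := by exact_mod_cast hr.out.pos
  induction n using Nat.strong_induction_on with
  | _ n ih =>
    intro g s hn h
    by_cases hst : ∀ j, 1 ≤ j → ∀ J ⊆ s, J.Nonempty → J.card ≤ r → (∀ i ∈ J, (g i).1 ≠ 0 ∧ addOrderOf (g i).2 = p ^ j) →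
      ∑ i ∈ J, (g i).1 ≠ 0
    · exact G_ZF_stuck hm hrp h hst
    push Not at hst
    obtain ⟨j, hj1, J, hJ, ⟨k, hk⟩, hcard, hJp, hJ0⟩ := hst
    have hJ2 : 2 ≤ J.card := two_le_card (g := fun i => (g i).1) ⟨k, hk⟩ (fun i hi => (hJp i hi).1) hJ0
    have hc := merge_card hJ hk
    have hsn : ∑ i ∈ J, g i ≠ 0 := h J hJ ⟨k, hk⟩
    have hs2 : (∑ i ∈ J, g i).2 ≠ 0 := fun h2 => hsn (Prod.ext (by rw [fst_sum]; exact hJ0) h2)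
    have := ih _ (by omega) _ _ rfl (h.merge hJ hk)
    rw [merge_weight wt hk] at this
    have hfil : ((insert k (s \ J)).filter (fun i => (Function.update g k (∑ i ∈ J, g i) i).2 = 0)) ⊆
        s.filter (fun i => (g i).2 = 0) := by
      intro i hi
      simp only [mem_filter, mem_insert, mem_sdiff] at hi ⊢
      by_cases hik : i = k
      · subst hik; simp only [Function.update_self] at hi; exact absurd hi.2 hs2
      · rw [Function.update_of_ne hik] at hi
        exact ⟨(hi.1.resolve_left hik).1, hi.2⟩
    have hfc : (((insert k (s \ J)).filter (fun i => (Function.update g k (∑ i ∈ J, g i) i).2 = 0)).card : ℝ) ≤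
        ((s.filter (fun i => (g i).2 = 0)).card : ℝ) := by exact_mod_cast card_le_card hfil
    have hJw : ∑ i ∈ J, wt (g i) ≤ wt (∑ i ∈ J, g i) := by
      have h1 : ∑ i ∈ J, wt (g i) = J.card * (1 / r * (1 / (p : ℝ) ^ j)) := by
        rw [sum_congr rfl (g := fun _ => 1 / (r : ℝ) * (1 / (p : ℝ) ^ j)), sum_const, nsmul_eq_mul]
        intro i hi
        rw [wt_mixed hm hrp (hJp i hi).1, wt, (hJp i hi).2]; push_cast; rfl
      have hz : p ^ j • (∑ i ∈ J, g i) = 0 := by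
        refine Prod.ext ?_ ?_
        · rw [Prod.smul_fst, fst_sum, hJ0, smul_zero]; rfl
        · rw [Prod.smul_snd, snd_sum, smul_sum]
          refine sum_eq_zero fun i hi => ?_
          exact addOrderOf_dvd_iff_nsmul_eq_zero.1 (by rw [(hJp i hi).2])
      refine le_trans ?_ (wt_ge (pow_pos hp.out.pos j) hz)
      rw [h1]
      push_cast
      have h2 : (J.card : ℝ) ≤ r := by exact_mod_cast hcard
      calc (J.card : ℝ) * (1 / r * (1 / (p : ℝ) ^ j)) ≤ r * (1 / r * (1 / (p : ℝ) ^ j)) := by gcongr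
        _ = 1 / (p : ℝ) ^ j := by field_simp
    have hsplit := sum_sdiff (f := fun i => wt (g i)) hJ
    have hdiv := div_le_div_of_nonneg_right hfc hr0.le
    linarith

theorem G_ZF (hm : 1 ≤ m) (hrp : r < p) {g : ι → ZMod r × ZMod (p ^ m) × ZMod p} {s : Finset ι}
    (h : ZF g s) : ∑ i ∈ s, wt (g i) ≤ ((r : ℝ) - 1) / r + kH p m := by
  obtain ⟨-, hle⟩ := card_S0 (h.mono (filter_subset (fun i => (g i).2 = 0) s)) (fun i hi => (mem_filter.1 hi).2)
  have hr0 : (0 : ℝ) < r := by exact_mod_cast hr.out.pos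
  rcases hle.eq_or_lt with he | hlt
  · exact G_ZF_a hm h he
  · refine (G_ZF_b hm hrp _ g s rfl h).trans ?_
    gcongr
    rw [← add_div]
    gcongr
    have : ((s.filter (fun i => (g i).2 = 0)).card : ℝ) + 1 + 1 ≤ r := by exact_mod_cast hlt
    linarith

theorem G_case1 (hm : 1 ≤ m) (hp2 : 2 < p) (hr23 : r = 2 ∨ r = 3) {g : ι → ZMod r × ZMod (p ^ m) × ZMod p}
    {s J : Finset ι} (h : PU g s) (hJ : J ⊆ s) (hJne : J.Nonempty) (hJ2 : ∀ i ∈ J, (g i).2 = 0)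
    (hJ0 : ∑ i ∈ J, g i = 0) : ∑ i ∈ s, wt (g i) ≤ 2 + ∑ j ∈ Icc 1 m, (p : ℝ) / p ^ j := by
  have : NeZero (p ^ m) := ⟨pow_ne_zero _ hp.out.ne_zero⟩
  have : NeZero r := ⟨hr.out.ne_zero⟩
  have hr0 : (0 : ℝ) < r := by exact_mod_cast hr.out.pos
  have h1 : ∀ i ∈ J, (g i).1 ≠ 0 := fun i hi h1 => h.1 i (hJ hi) (Prod.ext h1 (hJ2 i hi))
  have hsndz : ∀ A ⊆ J, ∑ i ∈ A, (g i).2 = 0 := fun A hA => sum_eq_zero fun i hi => hJ2 i (hA hi)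
  have hJc : J.card ≤ r := by
    have : PU (fun i => (g i).1) J := by
      apply (h.mono hJ).hom (AddMonoidHom.fst _ _)
      intro A hA hz
      refine Prod.ext ?_ ?_
      · rw [fst_sum]; exact hz
      · rw [snd_sum]; exact hsndz A hA
    have := this.card_le (⊤ : AddSubgroup (ZMod r)) (by simp)
    rwa [AddSubgroup.card_top, Nat.card_zmod] at this
  have hfill : ∀ c : ZMod r, ∃ B ⊆ J, ∑ i ∈ B, g i = (c, 0) := by
    intro c
    obtain ⟨k, hk⟩ := hJne
    have h3 : ∀ r, (r = 2 ∨ r = 3) → ∀ a c : ZMod r, a ≠ 0 → c = 0 ∨ c = a ∨ c = -a := by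
      rintro r (rfl | rfl) <;> decide
    have hgk : g k = ((g k).1, 0) := Prod.ext rfl (hJ2 k hk)
    rcases h3 r hr23 (g k).1 c (h1 k hk) with rfl | rfl | rfl
    · exact ⟨∅, by simp, by rw [sum_empty]; rfl⟩
    · exact ⟨{k}, by simpa using hk, by simpa using hgk⟩
    · refine ⟨J.erase k, erase_subset _ _, ?_⟩
      have := add_sum_erase J g hk
      rw [hJ0] at this
      rw [eq_neg_of_add_eq_zero_right this]
      exact Prod.ext rfl (by rw [Prod.snd_neg, hJ2 k hk, neg_zero])
  have e1 : ∑ i ∈ J, wt (g i) ≤ 1 := by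
    rw [sum_congr rfl (g := fun _ => 1 / (r : ℝ)), sum_const, nsmul_eq_mul, mul_one_div, div_le_one hr0]
    · exact_mod_cast hJc
    · intro i hi; exact wt_left (hJ2 i hi) (h1 i hi)
  have e2 : ∑ i ∈ s \ J, wt (g i) ≤ 1 + ∑ j ∈ Icc 1 m, (p : ℝ) / p ^ j := by
    refine (sum_le_sum fun i _ => wt_le_snd (g i)).trans ?_
    refine H_PU hm hp2 (g := fun i => (g i).2) ?_
    apply (h.mono sdiff_subset).hom (AddMonoidHom.snd _ _)
    intro A hA hz
    obtain ⟨B, hB, eB⟩ := hfill (-∑ i ∈ A, (g i).1)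
    refine (h.split hJ sdiff_subset disjoint_sdiff hJ0 hB hA ?_).2
    rw [eB]
    refine Prod.ext ?_ ?_
    · rw [Prod.fst_add, fst_sum]; simp
    · rw [Prod.snd_add, snd_sum]; simpa using hz
  have := sum_sdiff (f := fun i => wt (g i)) hJ
  linarith

theorem exists_D {G : Type*} [AddCommGroup G] {g : ι → G} {s : Finset ι} (Q : ι → Prop) (h : PU g s)
    (h0 : ∑ i ∈ s, g i = 0) (hQ : ∀ P ⊆ s, MZ g P → ∃ d ∈ P, Q d) :
    ∃ D ⊆ s, (∀ d ∈ D, Q d) ∧ ZF g (s \ D) ∧ ∃ C, GoodC g s C ∧ 2 ^ D.card ≤ C.card := by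
  induction s using Finset.strongInduction with
  | H s ih =>
    rcases s.eq_empty_or_nonempty with rfl | hne
    · refine ⟨∅, Subset.rfl, by simp, ?_, {0}, good_empty g, by simp⟩
      intro A hA hne
      simp at hA
      exact absurd hA hne.ne_empty
    obtain ⟨P, hP, hm⟩ := exists_MZ hne h0
    obtain ⟨d, hd, hQd⟩ := hQ P hP hm
    obtain ⟨D, hD, hDQ, hDz, C, hC, hCc⟩ := ih (s \ P) (sdiff_ssubset hP hm.1) (h.mono sdiff_subset)
      (sum_sdiff_zero hP h0 hm.2.1) (fun P' hP' => hQ P' (hP'.trans sdiff_subset))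
    have hdD : d ∉ D := fun hh => (mem_sdiff.1 (hD hh)).2 hd
    obtain ⟨C₁, hC₁, hc₁⟩ := hm.chain
    obtain ⟨C₂, hC₂, hc₂⟩ := GoodC.prod h hP sdiff_subset disjoint_sdiff hm.2.1 hC₁ hC
    rw [union_sdiff_of_subset hP] at hC₂
    refine ⟨insert d D, ?_, ?_, ?_, C₂, hC₂, ?_⟩
    · intro x hx
      rcases mem_insert.1 hx with rfl | hx
      · exact hP hd
      · exact (mem_sdiff.1 (hD hx)).1
    · intro x hx
      rcases mem_insert.1 hx with rfl | hx
      · exact hQd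
      · exact hDQ x hx
    · intro A hA hAne hA0
      have hAs : A ⊆ s := hA.trans sdiff_subset
      have hi := h.2 A hAs P hP hA0 hm.2.1
      have hemp : A ∩ P = ∅ := by
        by_contra hne
        refine hm.2.2 (A ∩ P) (inter_subset_right.ssubset_of_ne ?_) (nonempty_iff_ne_empty.2 hne) hi
        intro he
        have : d ∈ A ∩ P := by rw [he]; exact hd
        have := hA (mem_inter.1 this).1
        simp at this
      refine hDz A ?_ hAne hA0
      intro x hx
      have h1 := hA hx
      simp only [mem_sdiff, mem_insert, not_or] at h1 ⊢
      refine ⟨⟨h1.1, fun hxP => ?_⟩, h1.2.2⟩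
      have : x ∈ A ∩ P := mem_inter.2 ⟨hx, hxP⟩
      rw [hemp] at this
      simp at this
    · rw [card_insert_of_notMem hdD, hc₂, hc₁, pow_succ, mul_comm]
      exact Nat.mul_le_mul (two_le_card hm.1 (h.mono hP).1 hm.2.1) hCc

theorem G_upper (hm : 1 ≤ m) (hr23 : r = 2 ∨ r = 3) (hrp : r < p)
    (hlarge : 1 / (r : ℝ) + ((p : ℝ) ^ m - 1) / ((p : ℝ) ^ (m + 1) - (p : ℝ) ^ m)
        + 1 / (p : ℝ) ≥
      Real.logb 2 ((r : ℝ) * (p : ℝ) ^ (m + 1)) / (p : ℝ))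
    {g : ι → ZMod r × ZMod (p ^ m) × ZMod p} {s : Finset ι} (h : PU g s) (h0 : ∑ i ∈ s, g i = 0) :
    ∑ i ∈ s, wt (g i) ≤ 2 + ((p : ℝ) ^ m - 1) / ((p : ℝ) ^ m - (p : ℝ) ^ (m - 1)) := by
  have : NeZero (p ^ m) := ⟨pow_ne_zero _ hp.out.ne_zero⟩
  have : NeZero r := ⟨hr.out.ne_zero⟩
  have hr0 : (0 : ℝ) < r := by exact_mod_cast hr.out.pos
  have hp0 : (1 : ℝ) < p := by exact_mod_cast hp.out.one_lt
  have hp2 : 2 < p := by omega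
  by_cases hcase : ∃ J ⊆ s, J.Nonempty ∧ (∀ i ∈ J, (g i).2 = 0) ∧ ∑ i ∈ J, g i = 0
  · obtain ⟨J, hJ, a, b, c⟩ := hcase
    have := G_case1 hm hp2 hr23 h hJ a b c
    rwa [geo2 hm hp0] at this
  push Not at hcase
  obtain ⟨D, hD, hDQ, hDz, C, hC, hCc⟩ := exists_D (fun i => (g i).2 ≠ 0) h h0 (by
    intro P hP hPm
    by_contra hall
    push Not at hall
    exact hcase P hP hPm.1 hall hPm.2.1)
  have hCle := hC.card_le (⊤ : AddSubgroup (ZMod r × ZMod (p ^ m) × ZMod p)) (by simp)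
  rw [AddSubgroup.card_top, Nat.card_prod, Nat.card_prod, Nat.card_zmod, Nat.card_zmod, Nat.card_zmod, ← pow_succ] at hCle
  have hDlog : (D.card : ℝ) ≤ Real.logb 2 ((r : ℝ) * (p : ℝ) ^ (m + 1)) := by
    rw [Real.le_logb_iff_rpow_le (by norm_num) (by positivity), Real.rpow_natCast]
    exact_mod_cast hCc.trans hCle
  have hDw : ∑ i ∈ D, wt (g i) ≤ D.card / (p : ℝ) := by
    rw [div_eq_mul_one_div, ← nsmul_eq_mul]
    apply sum_le_card_nsmul
    intro i hi
    refine (wt_le_snd (g i)).trans ?_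
    obtain ⟨j, _, e⟩ := H_ord hm (g i).2
    have hj : j ≠ 0 := by
      rintro rfl
      rw [pow_zero, AddMonoid.addOrderOf_eq_one_iff] at e
      exact hDQ i hi e
    rw [wt, e]
    apply one_div_le_one_div_of_le (by positivity)
    exact_mod_cast Nat.le_self_pow hj p
  have hz := G_ZF hm hrp hDz
  have hsum := sum_sdiff (f := fun i => wt (g i)) hD
  have hdiv : (D.card : ℝ) / p ≤ Real.logb 2 ((r : ℝ) * (p : ℝ) ^ (m + 1)) / p := by gcongr
  have hfin : 1 / (r : ℝ) + ((p : ℝ) ^ m - 1) / ((p : ℝ) ^ (m + 1) - (p : ℝ) ^ m)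
        + 1 / (p : ℝ) + (((r : ℝ) - 1) / r + kH p m) = 2 + ((p : ℝ) ^ m - 1) / ((p : ℝ) ^ m - (p : ℝ) ^ (m - 1)) := by
    rw [kH, geo1 m (by positivity)]
    obtain ⟨k, rfl⟩ : ∃ k, m = k + 1 := ⟨m - 1, by omega⟩
    have h1 : (p : ℝ) - 1 ≠ 0 := by linarith
    have e1 : (p : ℝ) ^ (k + 1 + 1) - (p : ℝ) ^ (k + 1) = p ^ (k + 1) * (p - 1) := by ring
    have e2 : (p : ℝ) ^ (k + 1) - (p : ℝ) ^ (k + 1 - 1) = p ^ k * (p - 1) := by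
      rw [Nat.add_sub_cancel]; ring
    rw [e1, e2]
    have hpp : (p : ℝ) ≠ 0 := by positivity
    field_simp
    ring
  linarith
end Gpart


section ufim
variable {G : Type*} [AddCommGroup G]

theorem exists_parts {ι : Type*} [DecidableEq ι] {g : ι → G} {s : Finset ι} (h0 : ∑ i ∈ s, g i = 0) :
    ∃ Q : Finset (Finset ι), (∀ I ∈ Q, MZ g I) ∧ (Q : Set (Finset ι)).PairwiseDisjoint id ∧ Q.biUnion id = s := by
  induction s using Finset.strongInduction with
  | H s ih =>
    rcases s.eq_empty_or_nonempty with rfl | hne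
    · exact ⟨∅, by simp, by simp, by simp⟩
    obtain ⟨P, hP, hm⟩ := exists_MZ hne h0
    obtain ⟨Q, h1, h2, h3⟩ := ih (s \ P) (sdiff_ssubset hP hm.1) (sum_sdiff_zero hP h0 hm.2.1)
    refine ⟨insert P Q, ?_, ?_, ?_⟩
    · intro I hI
      rcases mem_insert.1 hI with rfl | hI
      · exact hm
      · exact h1 I hI
    · rw [coe_insert]
      refine h2.insert fun I hI _ => ?_
      have : I ⊆ s \ P := by rw [← h3]; exact subset_biUnion_of_mem id hI
      exact disjoint_of_subset_right this disjoint_sdiff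
    · rw [biUnion_insert, h3]; simp [hP]

variable {ℓ : ℕ} {g : Fin ℓ → G}

/-- a finite partition from parts -/
def mkPart (g : Fin ℓ → G) (Q : Finset (Finset (Fin ℓ))) (h1 : ∀ I ∈ Q, MZ g I)
    (h2 : (Q : Set (Finset (Fin ℓ))).PairwiseDisjoint id) (h3 : Q.biUnion id = univ) :
    Finpartition (univ : Finset (Fin ℓ)) where
  parts := Q
  supIndep := Finset.supIndep_iff_pairwiseDisjoint.2 h2
  sup_parts := by rw [← h3, sup_eq_biUnion]
  bot_notMem := fun h => by
    have := (h1 _ h).1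
    simp at this

theorem ufim_total (h : IsUFIM g) : ∑ i, g i = 0 := by
  obtain ⟨-, P, hP, -⟩ := h
  rw [← P.biUnion_parts, sum_biUnion P.disjoint]
  exact sum_eq_zero fun I hI => (hP I hI).2.1

theorem ufim_pu (h : IsUFIM g) : PU g univ := by
  have ht := ufim_total h
  obtain ⟨hnz, P, hP, hu⟩ := h
  have key : ∀ A : Finset (Fin ℓ), ∑ i ∈ A, g i = 0 → ∃ Q ⊆ P.parts, Q.biUnion id = A := by
    intro A hA
    obtain ⟨Q, q1, q2, q3⟩ := exists_parts hA
    obtain ⟨R, r1, r2, r3⟩ := exists_parts (sum_sdiff_zero (subset_univ A) ht hA)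
    have hQA : ∀ I ∈ Q, I ⊆ A := fun I hI => by rw [← q3]; exact subset_biUnion_of_mem id hI
    have hRA : ∀ I ∈ R, I ⊆ univ \ A := fun I hI => by rw [← r3]; exact subset_biUnion_of_mem id hI
    have h1 : ∀ I ∈ Q ∪ R, MZ g I := by
      intro I hI
      rcases mem_union.1 hI with hI | hI
      · exact q1 I hI
      · exact r1 I hI
    have h2 : ((Q ∪ R : Finset _) : Set (Finset (Fin ℓ))).PairwiseDisjoint id := by
      rw [coe_union, Set.pairwiseDisjoint_union]
      refine ⟨q2, r2, fun I hI J hJ _ => ?_⟩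
      exact disjoint_of_subset_left (hQA I hI) (disjoint_of_subset_right (hRA J hJ) disjoint_sdiff)
    have h3 : (Q ∪ R).biUnion id = univ := by
      rw [union_biUnion, q3, r3]; simp
    have := hu (mkPart g (Q ∪ R) h1 h2 h3) h1
    refine ⟨Q, ?_, q3⟩
    rw [← this]
    exact subset_union_left
  refine ⟨fun i _ => hnz i, ?_⟩
  intro A _ B _ hA hB
  obtain ⟨Q, hQ, eQ⟩ := key A hA
  obtain ⟨R, hR, eR⟩ := key B hB
  have e : A ∩ B = (Q ∩ R).biUnion id := by
    ext x
    simp only [mem_inter, mem_biUnion, id]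
    rw [← eQ, ← eR]
    simp only [mem_biUnion, id]
    constructor
    · rintro ⟨⟨I, hI, hx⟩, ⟨J, hJ, hy⟩⟩
      have : I = J := P.disjoint.elim_finset (hQ hI) (hR hJ) x hx hy
      subst this
      exact ⟨I, ⟨hI, hJ⟩, hx⟩
    · rintro ⟨I, ⟨h1, h2⟩, hx⟩
      exact ⟨⟨I, h1, hx⟩, ⟨I, h2, hx⟩⟩
  rw [e, sum_biUnion]
  · exact sum_eq_zero fun I hI => (hP I (hQ (mem_inter.1 hI).1)).2.1
  · exact P.disjoint.subset (by intro I hI; exact hQ (mem_inter.1 hI).1)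

theorem pu_ufim (h : PU g univ) (h0 : ∑ i, g i = 0) : IsUFIM g := by
  refine ⟨fun i => h.1 i (mem_univ i), ?_⟩
  obtain ⟨Q, q1, q2, q3⟩ := exists_parts h0
  have key : ∀ P R : Finpartition (univ : Finset (Fin ℓ)), IsFactorization g P → IsFactorization g R →
      P.parts ⊆ R.parts := by
    intro P R hP hR I hI
    obtain ⟨x, hx⟩ := (hP I hI).1
    obtain ⟨J, hJ, hxJ⟩ := R.exists_mem (mem_univ x)
    have hz := h.2 I (subset_univ _) J (subset_univ _) (hP I hI).2.1 (hR J hJ).2.1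
    have hne : (I ∩ J).Nonempty := ⟨x, mem_inter.2 ⟨hx, hxJ⟩⟩
    have e1 : I ∩ J = I := by
      by_contra hh
      exact (hP I hI).2.2 _ (inter_subset_left.ssubset_of_ne hh) hne hz
    have e2 : I ∩ J = J := by
      by_contra hh
      exact (hR J hJ).2.2 _ (inter_subset_right.ssubset_of_ne hh) hne hz
    rw [← e1, e2]; exact hJ
  have hM : IsFactorization g (mkPart g Q q1 q2 q3) := q1
  refine ⟨mkPart g Q q1 q2 q3, hM, ?_⟩
  intro R hR
  exact Finpartition.ext ((key _ _ hR hM).antisymm (key _ _ hM hR))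

theorem pu_equiv {ι κ : Type*} [DecidableEq ι] [DecidableEq κ] [Fintype ι] [Fintype κ] {g : ι → G} (e : κ ≃ ι)
    (h : PU g univ) : PU (fun k => g (e k)) univ := by
  refine ⟨fun i _ => h.1 _ (mem_univ _), ?_⟩
  have key : ∀ A : Finset κ, ∑ k ∈ A, g (e k) = ∑ i ∈ A.map e.toEmbedding, g i := by
    intro A; rw [sum_map]; rfl
  intro A _ B _ hA hB
  rw [key] at hA hB ⊢
  rw [map_inter]
  exact h.2 _ (subset_univ _) _ (subset_univ _) hA hB

theorem pu_blocks {ι κ : Type*} [DecidableEq ι] [DecidableEq κ] [Fintype ι] [Fintype κ] {g : ι → G}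
    (β : ι → κ) (hne : ∀ i, g i ≠ 0) (hb : ∀ b, ∑ i with β i = b, g i = 0)
    (hA : ∀ A : Finset ι, ∑ i ∈ A, g i = 0 → ∀ b, (∀ i ∈ A, β i ≠ b) ∨ (∀ i, β i = b → i ∈ A)) :
    PU g univ := by
  refine ⟨fun i _ => hne i, ?_⟩
  intro A _ B _ h1 h2
  rw [← sum_fiberwise (A ∩ B) β]
  refine sum_eq_zero fun b _ => ?_
  have hz : ∀ C : Finset ι, (∀ i ∈ C, β i ≠ b) → ∑ i ∈ C with β i = b, g i = 0 := by
    intro C hC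
    rw [filter_false_of_mem hC, sum_empty]
  rcases hA A h1 b with h3 | h3
  · exact hz _ fun i hi => h3 i (mem_inter.1 hi).1
  rcases hA B h2 b with h4 | h4
  · exact hz _ fun i hi => h4 i (mem_inter.1 hi).2
  rw [← hb b]
  congr 1
  ext i
  simp only [mem_filter, mem_inter, mem_univ, true_and, and_iff_right_iff_imp]
  exact fun h => ⟨h3 i h, h4 i h⟩
end ufim

section example_seq
variable {r p m : ℕ} [hp : Fact p.Prime] [hr : Fact r.Prime]

theorem digits {p : ℕ} (hp : 0 < p) : ∀ (m : ℕ) (t : Fin m → ℤ), (∀ j, |t j| < p) →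
    ((p : ℤ) ^ m ∣ ∑ j : Fin m, (p : ℤ) ^ (j : ℕ) * t j) → ∀ j, t j = 0 := by
  intro m
  induction m with
  | zero => intro t _ _ j; exact j.elim0
  | succ m ih =>
    intro t ht hd
    rw [Fin.sum_univ_succ] at hd
    have e : ∑ j : Fin m, (p : ℤ) ^ ((j.succ : Fin (m + 1)) : ℕ) * t j.succ =
        p * ∑ j : Fin m, (p : ℤ) ^ (j : ℕ) * t j.succ := by
      rw [mul_sum]
      refine sum_congr rfl fun j _ => ?_
      rw [Fin.val_succ, pow_succ]; ring
    rw [e] at hd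
    have h0 : t 0 = 0 := by
      have h1 : (p : ℤ) ∣ (p : ℤ) ^ ((0 : Fin (m + 1)) : ℕ) * t 0 + p * ∑ j : Fin m, (p : ℤ) ^ (j : ℕ) * t j.succ :=
        (dvd_pow_self _ (by omega)).trans hd
      have h2 := (Int.dvd_add_left (dvd_mul_right _ _)).1 h1
      simp only [Fin.val_zero, pow_zero, one_mul] at h2
      exact Int.eq_zero_of_abs_lt_dvd h2 (ht 0)
    rw [h0, mul_zero, zero_add, pow_succ'] at hd
    have hd' := Int.dvd_of_mul_dvd_mul_left (by exact_mod_cast hp.ne') hd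
    have := ih (fun j => t j.succ) (fun j => ht _) hd'
    intro j
    exact Fin.cases h0 this j

/-- coefficients of the extremal family -/
def cf (p : ℕ) (k : Fin p) : ℤ := if (k : ℕ) = 0 then 1 - p else 1

theorem cf_sum (A : Finset (Fin p)) : |∑ k ∈ A, cf p k| < p ∧ (∑ k ∈ A, cf p k = 0 → A = ∅ ∨ A = univ) := by
  have hp0 := hp.out.pos
  let z : Fin p := ⟨0, hp0⟩
  have hz : ∀ k : Fin p, (k : ℕ) = 0 ↔ k = z := fun k => by rw [Fin.ext_iff]
  have e : ∑ k ∈ A, cf p k = A.card - if z ∈ A then (p : ℤ) else 0 := by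
    have h1 : ∀ k, cf p k = 1 - if k = z then (p : ℤ) else 0 := by
      intro k; unfold cf; simp only [hz]; split_ifs <;> ring
    simp only [h1, sum_sub_distrib, sum_ite_eq']
    simp
  have hle : A.card ≤ p := by simpa using card_le_univ A
  rw [e]
  split_ifs with h
  · have : 0 < A.card := card_pos.2 ⟨z, h⟩
    refine ⟨by rw [abs_lt]; omega, fun h2 => Or.inr ?_⟩
    apply eq_univ_of_card
    rw [Fintype.card_fin]; omega
  · have : A.card < p := by
      refine lt_of_le_of_ne hle fun he => h ?_
      rw [eq_univ_of_card A (by rw [Fintype.card_fin]; exact he)]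
      exact mem_univ _
    refine ⟨by rw [abs_lt]; omega, fun h2 => Or.inl ?_⟩
    apply card_eq_zero.1; omega

theorem cf_ndvd (k : Fin p) : ¬ (p : ℤ) ∣ cf p k := by
  have h1 : ¬ (p : ℤ) ∣ 1 := by
    intro h
    have := Int.le_of_dvd one_pos h
    have := hp.out.one_lt
    omega
  unfold cf
  split_ifs
  · intro h
    exact h1 ((Int.dvd_iff_dvd_of_dvd_sub (by simpa using h)).1 (dvd_refl _) |> fun _ => by
      have := Int.dvd_add h (dvd_refl (p : ℤ)); simpa using this)
  · exact h1

/-- extremal family -/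
def ex (r p m : ℕ) : Fin r ⊕ Fin p ⊕ (Fin m × Fin p) → ZMod r × ZMod (p ^ m) × ZMod p
  | .inl _ => (1, 0, 0)
  | .inr (.inl _) => (0, 0, 1)
  | .inr (.inr (j, k)) => (0, (((p : ℤ) ^ (j : ℕ) * cf p k : ℤ) : ZMod (p ^ m)), 0)

/-- blocks of the extremal family -/
def bl (r p m : ℕ) : Fin r ⊕ Fin p ⊕ (Fin m × Fin p) → Option (Option (Fin m))
  | .inl _ => none
  | .inr (.inl _) => some none
  | .inr (.inr (j, _)) => some (some j)

theorem sumA {M : Type*} [AddCommMonoid M] (f : Fin r ⊕ Fin p ⊕ (Fin m × Fin p) → M)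
    (A : Finset (Fin r ⊕ Fin p ⊕ (Fin m × Fin p))) : ∑ i ∈ A, f i =
      ∑ x with Sum.inl x ∈ A, f (.inl x) + (∑ x with Sum.inr (Sum.inl x) ∈ A, f (.inr (.inl x)) +
        ∑ j, ∑ k with Sum.inr (Sum.inr (j, k)) ∈ A, f (.inr (.inr (j, k)))) := by
  have : ∑ i ∈ A, f i = ∑ i, if i ∈ A then f i else 0 := by simp
  rw [this]
  simp only [Fintype.sum_sum_type, Fintype.sum_prod_type, sum_filter]

theorem card_cast {n : ℕ} (hn : 0 < n) (A : Finset (Fin n)) (h : (A.card : ZMod n) = 0) : A = ∅ ∨ A = univ := by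
  rw [ZMod.natCast_eq_zero_iff] at h
  have hle : A.card ≤ n := by simpa using card_le_univ A
  rcases Nat.eq_zero_or_pos A.card with h0 | h0
  · exact Or.inl (card_eq_zero.1 h0)
  · right
    apply eq_univ_of_card
    rw [Fintype.card_fin]
    exact le_antisymm hle (Nat.le_of_dvd h0 h)

theorem ex_sum (A : Finset (Fin r ⊕ Fin p ⊕ (Fin m × Fin p))) : ∑ i ∈ A, ex r p m i =
    (((univ.filter fun x => Sum.inl x ∈ A).card : ZMod r),
      ((∑ j : Fin m, (p : ℤ) ^ (j : ℕ) * ∑ k with Sum.inr (Sum.inr (j, k)) ∈ A, cf p k : ℤ) : ZMod (p ^ m)),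
      ((univ.filter fun x => Sum.inr (Sum.inl x) ∈ A).card : ZMod p)) := by
  rw [sumA]
  simp only [ex]
  refine Prod.ext ?_ (Prod.ext ?_ ?_)
  · simp [Prod.fst_sum]
  · simp [Prod.fst_sum, Prod.snd_sum, mul_sum]
  · simp [Prod.snd_sum]

theorem ex_zero {A : Finset (Fin r ⊕ Fin p ⊕ (Fin m × Fin p))} (h : ∑ i ∈ A, ex r p m i = 0) (b : Option (Option (Fin m))) :
    (∀ i ∈ A, bl r p m i ≠ b) ∨ (∀ i, bl r p m i = b → i ∈ A) := by
  rw [ex_sum, Prod.mk_eq_zero, Prod.mk_eq_zero] at h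
  obtain ⟨h1, h2, h3⟩ := h
  rcases b with _ | _ | j
  · rcases card_cast hr.out.pos _ h1 with e | e
    · left
      rintro (x | x | ⟨j, k⟩) hx hb <;> simp [bl] at hb
      have : x ∈ univ.filter fun x => Sum.inl x ∈ A := by simpa using hx
      rw [e] at this; simp at this
    · right
      rintro (x | x | ⟨j, k⟩) hb <;> simp [bl] at hb
      have : x ∈ univ.filter fun x => Sum.inl x ∈ A := by rw [e]; simp
      simpa using this
  · rcases card_cast hp.out.pos _ h3 with e | e
    · left
      rintro (x | x | ⟨j, k⟩) hx hb <;> simp [bl] at hb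
      have : x ∈ univ.filter fun x => Sum.inr (Sum.inl x) ∈ A := by simpa using hx
      rw [e] at this; simp at this
    · right
      rintro (x | x | ⟨j, k⟩) hb <;> simp [bl] at hb
      have : x ∈ univ.filter fun x => Sum.inr (Sum.inl x) ∈ A := by rw [e]; simp
      simpa using this
  · rw [ZMod.intCast_zmod_eq_zero_iff_dvd] at h2
    push_cast at h2
    have h4 := digits hp.out.pos m _ (fun j => (cf_sum _).1) h2 j
    rcases (cf_sum _).2 h4 with e | e
    · left
      rintro (x | x | ⟨j', k⟩) hx hb <;> simp [bl] at hb
      subst hb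
      have : k ∈ univ.filter fun k => Sum.inr (Sum.inr (j', k)) ∈ A := by simpa using hx
      rw [e] at this; simp at this
    · right
      rintro (x | x | ⟨j', k⟩) hb <;> simp [bl] at hb
      subst hb
      have : k ∈ univ.filter fun k => Sum.inr (Sum.inr (j', k)) ∈ A := by rw [e]; simp
      simpa using this

theorem cf_total : ∑ k, cf p k = 0 := by
  have hp0 := hp.out.pos
  let z : Fin p := ⟨0, hp0⟩
  have hz : ∀ k : Fin p, (k : ℕ) = 0 ↔ k = z := fun k => by rw [Fin.ext_iff]
  have h1 : ∀ k, cf p k = 1 - if k = z then (p : ℤ) else 0 := by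
    intro k; unfold cf; simp only [hz]; split_ifs <;> ring
  simp only [h1, sum_sub_distrib, sum_ite_eq']
  simp

theorem ex_block (b : Option (Option (Fin m))) : ∑ i with bl r p m i = b, ex r p m i = 0 := by
  rw [ex_sum, Prod.mk_eq_zero, Prod.mk_eq_zero]
  refine ⟨?_, ?_, ?_⟩
  · by_cases hb : none = b
    · rw [filter_true_of_mem]
      · simp
      · intro x _; rw [mem_filter]; exact ⟨mem_univ _, hb⟩
    · rw [filter_false_of_mem]
      · simp
      · intro x _ h; exact hb (mem_filter.1 h).2
  · have : ∀ j' : Fin m, ∑ k with Sum.inr (Sum.inr (j', k)) ∈ univ.filter (fun i => bl r p m i = b), cf p k = 0 := by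
      intro j'
      by_cases hb : some (some j') = b
      · rw [filter_true_of_mem]
        · exact cf_total
        · intro x _; rw [mem_filter]; exact ⟨mem_univ _, hb⟩
      · rw [filter_false_of_mem]
        · simp
        · intro x _ h; exact hb (mem_filter.1 h).2
    simp only [this]
    simp
  · by_cases hb : some none = b
    · rw [filter_true_of_mem]
      · simp
      · intro x _; rw [mem_filter]; exact ⟨mem_univ _, hb⟩
    · rw [filter_false_of_mem]
      · simp
      · intro x _ h; exact hb (mem_filter.1 h).2

theorem ex_total : ∑ i, ex r p m i = 0 := by
  rw [← sum_fiberwise univ (bl r p m)]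
  exact sum_eq_zero fun b _ => ex_block b

theorem ord_lvl (j : Fin m) (k : Fin p) :
    addOrderOf (((p : ℤ) ^ (j : ℕ) * cf p k : ℤ) : ZMod (p ^ m)) = p ^ (m - (j : ℕ)) := by
  have hj := j.2
  obtain ⟨n, hn⟩ : ∃ n, m - (j : ℕ) = n + 1 := ⟨m - j - 1, by omega⟩
  have hmn : m = n + j + 1 := by omega
  have hp0 : (p : ℤ) ≠ 0 := by exact_mod_cast hp.out.ne_zero
  rw [hn]
  have key : ∀ l : ℕ, p ^ l • (((p : ℤ) ^ (j : ℕ) * cf p k : ℤ) : ZMod (p ^ m)) =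
      (((p : ℤ) ^ (l + j) * cf p k : ℤ) : ZMod (p ^ m)) := by
    intro l
    rw [nsmul_eq_mul]; push_cast; ring
  apply addOrderOf_eq_prime_pow
  · rw [key, ZMod.intCast_zmod_eq_zero_iff_dvd]
    push_cast
    intro hd
    have e : (p : ℤ) ^ m = (p : ℤ) ^ (n + j) * p := by
      rw [← pow_succ]; congr 1
    rw [e] at hd
    exact cf_ndvd k (Int.dvd_of_mul_dvd_mul_left (pow_ne_zero _ hp0) hd)
  · rw [key, ZMod.intCast_zmod_eq_zero_iff_dvd]
    push_cast
    refine Dvd.dvd.mul_right (pow_dvd_pow _ (by omega)) _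

theorem ex_ne (i) : ex r p m i ≠ 0 := by
  rcases i with x | x | ⟨j, k⟩
  · have := hr.out.one_lt
    have : Fact (1 < r) := ⟨this⟩
    simp [ex]
  · simp [ex]
  · intro h
    have h1 := ord_lvl j k
    have h2 := congrArg (fun x => x.2.1) h
    simp only [ex] at h2
    rw [h2] at h1
    simp only [Prod.snd_zero, Prod.fst_zero, addOrderOf_zero] at h1
    have hj := j.2
    exact absurd h1.symm (Nat.one_lt_pow (by omega) hp.out.one_lt).ne'

theorem ex_PU : PU (ex r p m) univ := pu_blocks (bl r p m) ex_ne ex_block (fun _ h b => ex_zero h b)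

theorem icc_range (m : ℕ) (f : ℕ → ℝ) : ∑ j ∈ Icc 1 m, f j = ∑ j ∈ range m, f (j + 1) := by
  induction m with
  | zero => simp
  | succ m ih => rw [sum_Icc_succ_top (by omega), sum_range_succ, ih]

theorem ex_weight : ∑ i, wt (ex r p m i) = 2 + ∑ j ∈ Icc 1 m, (p : ℝ) / p ^ j := by
  have hp0 : (p : ℝ) ≠ 0 := by exact_mod_cast hp.out.ne_zero
  have hr0 : (r : ℝ) ≠ 0 := by exact_mod_cast hr.out.ne_zero
  have : Fact (1 < r) := ⟨hr.out.one_lt⟩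
  have e1 : ∀ x, wt (ex r p m (.inl x)) = 1 / r := by
    intro x
    exact wt_left rfl (by simp [ex])
  have e2 : ∀ x, wt (ex r p m (.inr (.inl x))) = 1 / p := by
    intro x
    rw [wt_right (by rfl)]
    simp [ex, wt, Prod.addOrderOf, ord_zmod (r := p) (one_ne_zero)]
  have e3 : ∀ j k, wt (ex r p m (.inr (.inr (j, k)))) = 1 / (p : ℝ) ^ (m - (j : ℕ)) := by
    intro j k
    rw [wt_right (by rfl)]
    simp only [ex, wt]
    rw [Prod.addOrderOf]
    simp only [addOrderOf_zero, Nat.lcm_one_right]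
    rw [ord_lvl]
    push_cast; rfl
  rw [Fintype.sum_sum_type, Fintype.sum_sum_type, Fintype.sum_prod_type]
  simp only [e1, e2, e3, sum_const, card_univ, Fintype.card_fin, nsmul_eq_mul]
  rw [icc_range, ← sum_range_reflect, Fin.sum_univ_eq_sum_range (fun j => (p : ℝ) * (1 / (p : ℝ) ^ (m - j)))]
  rw [mul_one_div_cancel hr0, mul_one_div_cancel hp0, ← add_assoc]
  congr 1
  · norm_num
  · refine sum_congr rfl fun j hj => ?_
    rw [mem_range] at hj
    rw [mul_one_div, show m - 1 - j + 1 = m - j by omega]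
end example_seq

theorem K1_r_pm_p (r : ℕ) (hr : r = 2 ∨ r = 3) (m : ℕ) (hm : 1 ≤ m)
    (p : ℕ) (hp : p.Prime) (hrp : r < p)
    (hlarge : 1 / (r : ℝ) + ((p : ℝ) ^ m - 1) / ((p : ℝ) ^ (m + 1) - (p : ℝ) ^ m)
        + 1 / (p : ℝ) ≥
      Real.logb 2 ((r : ℝ) * (p : ℝ) ^ (m + 1)) / (p : ℝ)) :
    K1 (ZMod r × ZMod (p ^ m) × ZMod p) =
      2 + ((p : ℝ) ^ m - 1) / ((p : ℝ) ^ m - (p : ℝ) ^ (m - 1)) := by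
  have hpF : Fact p.Prime := ⟨hp⟩
  have hrF : Fact r.Prime := ⟨by rcases hr with rfl | rfl <;> norm_num⟩
  have hp1 : (1 : ℝ) < p := by exact_mod_cast hp.one_lt
  apply IsGreatest.csSup_eq
  constructor
  · let e := (Fintype.equivFin (Fin r ⊕ Fin p ⊕ (Fin m × Fin p))).symm
    refine ⟨_, fun k => ex r p m (e k), pu_ufim (pu_equiv e ex_PU) ?_, ?_⟩
    · rw [Equiv.sum_comp e (ex r p m)]; exact ex_total
    · have := ex_weight (r := r) (p := p) (m := m)
      rw [geo2 hm hp1] at this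
      rw [← this, ← Equiv.sum_comp e (fun i => wt (ex r p m i))]
      rfl
  · rintro x ⟨ℓ, g, hg, rfl⟩
    exact G_upper hm hr hrp hlarge (ufim_pu hg) (ufim_total hg)
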